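/- arXiv:1402.0604 — 3 statements merged into one kernel-verified Lean document; each statement's English description precedes it below -/
import Mathlib

section
/- There exist constants c>0 and h₀>0 such that for every h ∈ (0,h₀) there are E₀ = E₀(h) ∈ ℝ with |E₀(h) − 1| ≤ C h, and functions u = u(h), f = f(h) ∈ C_c^∞(ℝ) satisfying: (P(h) − E₀)u = f on ℝ; f is supported in {x : R−1 < |x| < R+1} (equivalently f = ψ·f); ‖χ·u‖_{L²(ℝ)} = 1; and ‖f‖_{L²(ℝ)} ≤ e^{−c/h}. -/
open MeasureTheory Set Real

noncomputable section

/-- Comparison of two differentiable functions through their derivatives. -/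
lemma qm_mvt_le {f f' g g' : ℝ → ℝ} {a b : ℝ} (hf : ∀ x, HasDerivAt f (f' x) x)
    (hg : ∀ x, HasDerivAt g (g' x) x) (hab : a ≤ b) (ha : f a ≤ g a)
    (h : ∀ x ∈ Icc a b, f' x ≤ g' x) : f b ≤ g b :=
  image_le_of_deriv_right_le_deriv_boundary (f := f) (f' := f') (B := g) (B' := g')
    (fun x _ => (hf x).continuousAt.continuousWithinAt)
    (fun x _ => (hf x).hasDerivWithinAt) ha
    (fun x _ => (hg x).continuousAt.continuousWithinAt)
    (fun x _ => (hg x).hasDerivWithinAt)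
    (fun x hx => h x ⟨hx.1, hx.2.le⟩) ⟨hab, le_rfl⟩

lemma qm_mono {g g' : ℝ → ℝ} {a b : ℝ}
    (hg : ∀ x, HasDerivAt g (g' x) x) (hab : a ≤ b)
    (h : ∀ x ∈ Icc a b, 0 ≤ g' x) : g a ≤ g b :=
  qm_mvt_le (f := fun _ => g a) (f' := fun _ => 0) (fun x => hasDerivAt_const x _) hg hab le_rfl h

lemma qm_anti {g g' : ℝ → ℝ} {a b : ℝ}
    (hg : ∀ x, HasDerivAt g (g' x) x) (hab : a ≤ b)
    (h : ∀ x ∈ Icc a b, g' x ≤ 0) : g b ≤ g a :=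
  qm_mvt_le (g := fun _ => g a) (g' := fun _ => 0) hg (fun x => hasDerivAt_const x _) hab le_rfl h

/-- Decay through the barrier. -/
lemma qm_decay {u v q : ℝ → ℝ} {b κ : ℝ} (hu : ∀ x, HasDerivAt u (v x) x)
    (hv : ∀ x, HasDerivAt v (q x * u x) x) (hb : 23 / 8 ≤ b) (hub : u b = 0)
    (hq : ∀ x ∈ Icc 2 b, 0 ≤ q x) (hqκ : ∀ x ∈ Icc (5 / 2 : ℝ) (11 / 4), κ ^ 2 ≤ q x) :
    v b ^ 2 ≤ 64 * exp (-κ / 2) * ∫ x in (2 : ℝ)..(9 / 4), u x ^ 2 := by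
  have hk : ∀ x, HasDerivAt (fun x => u x * v x) (v x ^ 2 + q x * u x ^ 2) x := fun x =>
    ((hu x).mul (hv x)).congr_deriv (by ring)
  have hk0 : ∀ x ∈ Icc 2 b, u x * v x ≤ 0 := by
    intro x hx
    have := qm_mono hk hx.2 (fun y hy => by
      have := hq y ⟨hx.1.trans hy.1, hy.2⟩
      positivity)
    simpa [hub] using this
  have hu2 : ∀ x, HasDerivAt (fun x => u x ^ 2) (2 * (u x * v x)) x := fun x =>
    ((hu x).pow 2).congr_deriv (by push_cast; ring)
  have hv2 : ∀ x, HasDerivAt (fun x => v x ^ 2) (2 * q x * (u x * v x)) x := fun x =>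
    ((hv x).pow 2).congr_deriv (by push_cast; ring)
  have hvb : ∀ x ∈ Icc 2 b, v b ^ 2 ≤ v x ^ 2 := by
    intro x hx
    refine qm_anti hv2 hx.2 (fun y hy => ?_)
    have hy' : y ∈ Icc 2 b := ⟨hx.1.trans hy.1, hy.2⟩
    have h1 := hq y hy'
    have h2 := hk0 y hy'
    nlinarith
  -- step 1
  have s1 : u (11 / 4) * v (11 / 4) + (b - 11 / 4) * v b ^ 2 ≤ 0 := by
    have := qm_mvt_le (f := fun x => u (11 / 4) * v (11 / 4) + (x - 11 / 4) * v b ^ 2)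
      (f' := fun _ => v b ^ 2) (a := 11 / 4) (b := b)
      (fun x => by
        have := (((hasDerivAt_id x).sub_const (11 / 4)).mul_const (v b ^ 2)).const_add
          (u (11 / 4) * v (11 / 4))
        simpa using this) hk (by linarith) (by simp)
      (fun x hx => by
        have hx' : x ∈ Icc 2 b := ⟨by linarith [hx.1], hx.2⟩
        have := hvb x hx'
        have := mul_nonneg (hq x hx') (sq_nonneg (u x))
        linarith)
    simpa [hub] using this
  -- step 2
  have s2 : u (5 / 2) * v (5 / 2) ≤ u (11 / 4) * v (11 / 4) * exp (κ / 2) := by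
    have hg : ∀ x, HasDerivAt (fun x => (u x * v x) * exp (2 * κ * (x - 5 / 2)))
        ((v x ^ 2 + q x * u x ^ 2 + 2 * κ * (u x * v x)) * exp (2 * κ * (x - 5 / 2))) x := by
      intro x
      have he : HasDerivAt (fun x => exp (2 * κ * (x - 5 / 2)))
          (exp (2 * κ * (x - 5 / 2)) * (2 * κ)) x := by
        have := (((hasDerivAt_id x).sub_const (5 / 2)).const_mul (2 * κ)).exp
        simpa using this
      exact ((hk x).mul he).congr_deriv (by ring)
    have := qm_mono hg (a := 5 / 2) (b := 11 / 4) (by norm_num) (fun x hx => by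
      apply mul_nonneg _ (exp_pos _).le
      have h1 := mul_le_mul_of_nonneg_right (hqκ x hx) (sq_nonneg (u x))
      nlinarith [sq_nonneg (v x + κ * u x)])
    simp only [sub_self, mul_zero, exp_zero, mul_one] at this
    convert this using 3
    ring
  -- step 3
  have s3 : u (5 / 2) ^ 2 ≤ u (9 / 4) ^ 2 + (1 / 4) * (2 * (u (5 / 2) * v (5 / 2))) := by
    have := qm_mvt_le (g := fun x => u (9 / 4) ^ 2 + (x - 9 / 4) * (2 * (u (5 / 2) * v (5 / 2))))
      (g' := fun _ => 2 * (u (5 / 2) * v (5 / 2))) (a := 9 / 4) (b := 5 / 2) hu2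
      (fun x => by
        have := (((hasDerivAt_id x).sub_const (9 / 4)).mul_const
          (2 * (u (5 / 2) * v (5 / 2)))).const_add (u (9 / 4) ^ 2)
        simpa using this) (by norm_num) (by simp)
      (fun x hx => by
        have := qm_mono hk hx.2 (fun y hy => by
          have := hq y ⟨by linarith [hx.1, hy.1], by linarith [hy.2]⟩
          positivity)
        linarith)
    norm_num at this ⊢
    linarith
  -- step 4
  have hcu : Continuous u := continuous_iff_continuousAt.2 fun x => (hu x).continuousAt
  have s4 : (1 / 4) * u (9 / 4) ^ 2 ≤ ∫ x in (2 : ℝ)..(9 / 4), u x ^ 2 := by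
    have : ∫ x in (2 : ℝ)..(9 / 4), u (9 / 4) ^ 2 ≤ ∫ x in (2 : ℝ)..(9 / 4), u x ^ 2 := by
      apply intervalIntegral.integral_mono_on (by norm_num)
      · exact continuous_const.intervalIntegrable _ _
      · exact (hcu.pow 2).intervalIntegrable _ _
      · intro x hx
        refine qm_anti hu2 hx.2 (fun y hy => ?_)
        have := hk0 y ⟨by linarith [hx.1, hy.1], by linarith [hy.2]⟩
        linarith
    rw [intervalIntegral.integral_const] at this
    norm_num at this ⊢
    linarith
  set I := ∫ x in (2 : ℝ)..(9 / 4), u x ^ 2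
  have e1 : exp (-κ / 2) * exp (κ / 2) = 1 := by
    rw [← exp_add]; ring_nf; simp
  have e0 := exp_pos (-κ / 2)
  have a1 : v b ^ 2 / 8 ≤ -(u (11 / 4) * v (11 / 4)) := by
    nlinarith [sq_nonneg (v b)]
  have a2 : -(u (11 / 4) * v (11 / 4)) ≤ exp (-κ / 2) * (-(u (5 / 2) * v (5 / 2))) := by
    have := mul_le_mul_of_nonneg_left s2 e0.le
    have h2 : exp (-κ / 2) * (u (11 / 4) * v (11 / 4) * exp (κ / 2))
      = u (11 / 4) * v (11 / 4) := by
      rw [mul_comm (u (11 / 4) * v (11 / 4)), ← mul_assoc, e1, one_mul]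
    linarith
  have a3 : -(u (5 / 2) * v (5 / 2)) ≤ 8 * I := by
    linarith [sq_nonneg (u (5 / 2))]
  have a4 := mul_le_mul_of_nonneg_left a3 e0.le
  linarith

/-- Growth estimate beyond the barrier. -/
lemma qm_growth {u v V V' : ℝ → ℝ} {b T h σ M E : ℝ} (hh : 0 < h) (hσ : 0 < σ)
    (hu : ∀ x, HasDerivAt u (v x) x)
    (hv : ∀ x, HasDerivAt v ((V x - E) / h ^ 2 * u x) x) (hub : u b = 0)
    (hV : ∀ x, HasDerivAt V (V' x) x) (hM : ∀ x, |V' x| ≤ M)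
    (hVE : ∀ x ∈ Icc b T, -σ ^ 2 ≤ E - V x) {x : ℝ} (hx : x ∈ Icc b T) :
    h ^ 2 * v x ^ 2 + σ ^ 2 * u x ^ 2 ≤
      h ^ 2 * v b ^ 2 * exp ((2 * σ / h + M / σ ^ 2) * (x - b)) := by
  set Λ := 2 * σ / h + M / σ ^ 2 with hΛ
  have hG : ∀ x, HasDerivAt (fun x => h ^ 2 * v x ^ 2 + (E - V x + 2 * σ ^ 2) * u x ^ 2)
      (4 * σ ^ 2 * (u x * v x) - V' x * u x ^ 2) x := by
    intro x
    have h1 := ((hv x).pow 2).const_mul (h ^ 2)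
    have h2 := (((hV x).const_sub E).add_const (2 * σ ^ 2)).mul ((hu x).pow 2)
    refine (h1.add h2).congr_deriv ?_
    have : h ≠ 0 := hh.ne'
    simp
    field_simp
    ring
  have hF : ∀ x, HasDerivAt (fun x => (h ^ 2 * v x ^ 2 + (E - V x + 2 * σ ^ 2) * u x ^ 2)
      * exp (-Λ * (x - b)))
      ((4 * σ ^ 2 * (u x * v x) - V' x * u x ^ 2
        - Λ * (h ^ 2 * v x ^ 2 + (E - V x + 2 * σ ^ 2) * u x ^ 2)) * exp (-Λ * (x - b))) x := by
    intro x
    have he : HasDerivAt (fun x => exp (-Λ * (x - b)))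
        (exp (-Λ * (x - b)) * (-Λ)) x := by
      have := (((hasDerivAt_id x).sub_const b).const_mul (-Λ)).exp
      simpa using this
    exact ((hG x).mul he).congr_deriv (by ring)
  have hM0 : 0 ≤ M := (abs_nonneg _).trans (hM 0)
  have key := qm_anti hF hx.1 (fun y hy => by
    apply mul_nonpos_of_nonpos_of_nonneg _ (exp_pos _).le
    have h1 : -σ ^ 2 ≤ E - V y := hVE y ⟨hy.1, hy.2.trans hx.2⟩
    have h2 : h ^ 2 * v y ^ 2 + σ ^ 2 * u y ^ 2 ≤
        h ^ 2 * v y ^ 2 + (E - V y + 2 * σ ^ 2) * u y ^ 2 := by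
      nlinarith [sq_nonneg (u y)]
    have hΛ0 : 0 ≤ Λ := by positivity
    have h3 := mul_le_mul_of_nonneg_left h2 hΛ0
    have h4 : 4 * σ ^ 2 * (u y * v y) ≤ (2 * σ / h) * (h ^ 2 * v y ^ 2 + σ ^ 2 * u y ^ 2) := by
      have : (2 * σ / h) * (h ^ 2 * v y ^ 2 + σ ^ 2 * u y ^ 2) - 4 * σ ^ 2 * (u y * v y)
        = (2 * σ / h) * (h * v y - σ * u y) ^ 2 := by field_simp; ring
      have : 0 ≤ (2 * σ / h) * (h * v y - σ * u y) ^ 2 := by positivity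
      linarith
    have h5 : - (V' y * u y ^ 2) ≤ (M / σ ^ 2) * (h ^ 2 * v y ^ 2 + σ ^ 2 * u y ^ 2) := by
      have e : (M / σ ^ 2) * (h ^ 2 * v y ^ 2 + σ ^ 2 * u y ^ 2)
        = (M / σ ^ 2) * (h ^ 2 * v y ^ 2) + M * u y ^ 2 := by field_simp
      have : 0 ≤ (M / σ ^ 2) * (h ^ 2 * v y ^ 2) := by positivity
      have : -V' y * u y ^ 2 ≤ M * u y ^ 2 :=
        mul_le_mul_of_nonneg_right ((neg_le_abs _).trans (hM y)) (sq_nonneg _)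
      linarith
    have h6 : Λ * (h ^ 2 * v y ^ 2 + σ ^ 2 * u y ^ 2) =
      (2 * σ / h) * (h ^ 2 * v y ^ 2 + σ ^ 2 * u y ^ 2) +
      (M / σ ^ 2) * (h ^ 2 * v y ^ 2 + σ ^ 2 * u y ^ 2) := by rw [hΛ]; ring
    linarith)
  simp only [sub_self, mul_zero, exp_zero, mul_one, hub] at key
  have h1 : -σ ^ 2 ≤ E - V x := hVE x hx
  have h2 : h ^ 2 * v x ^ 2 + σ ^ 2 * u x ^ 2 ≤
        h ^ 2 * v x ^ 2 + (E - V x + 2 * σ ^ 2) * u x ^ 2 := by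
      nlinarith [sq_nonneg (u x)]
  have h3 := mul_le_mul_of_nonneg_right key (exp_pos (Λ * (x - b))).le
  have h4 : exp (-Λ * (x - b)) * exp (Λ * (x - b)) = 1 := by
    rw [← exp_add]; ring_nf; simp
  rw [mul_assoc, h4] at h3
  calc _ ≤ _ := h2
    _ = _ := (mul_one _).symm
    _ ≤ _ := h3
    _ = _ := by ring

/-- Global existence for a bounded, globally Lipschitz scalar ODE. -/
lemma qm_global_ode (F : ℝ → ℝ → ℝ) (K L : NNReal) (hK : ∀ t, LipschitzWith K (F t))
    (hc : ∀ x, Continuous (fun t => F t x)) (hL : ∀ t x, |F t x| ≤ L) (x0 : ℝ) :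
    ∃ θ : ℝ → ℝ, θ 0 = x0 ∧ ∀ t, HasDerivAt θ (F t (θ t)) t := by
  have loc : ∀ n : ℕ, ∃ α : ℝ → ℝ, α 0 = x0 ∧
      ∀ t ∈ Ioo (-(n + 1 : ℝ)) (n + 1), HasDerivAt α (F t (α t)) t := by
    intro n
    have h0 : (0 : ℝ) ∈ Icc (-(n + 1 : ℝ)) (n + 1) := ⟨by linarith [n.cast_nonneg (α := ℝ)],
      by linarith [n.cast_nonneg (α := ℝ)]⟩
    have hpl : IsPicardLindelof F (⟨0, h0⟩ : Icc (-(n + 1 : ℝ)) (n + 1)) x0 (L * (n + 1)) 0 L K :=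
      { lipschitzOnWith := fun t _ => (hK t).lipschitzOnWith
        continuousOn := fun x _ => (hc x).continuousOn
        norm_le := fun t _ x _ => hL t x
        mul_max_le := by simp }
    obtain ⟨α, h1, h2⟩ := hpl.exists_eq_forall_mem_Icc_hasDerivWithinAt₀
    exact ⟨α, h1, fun t ht => (h2 t ⟨ht.1.le, ht.2.le⟩).hasDerivAt (Icc_mem_nhds ht.1 ht.2)⟩
  choose α h0 hα using loc
  have agree : ∀ m n : ℕ, m ≤ n → EqOn (α m) (α n) (Ioo (-(m + 1 : ℝ)) (m + 1)) := by
    intro m n hmn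
    have hmn' : (m : ℝ) ≤ n := by exact_mod_cast hmn
    refine ODE_solution_unique_of_mem_Ioo (v := F) (K := K) (s := fun _ => univ) (t₀ := 0)
      (fun t _ => (hK t).lipschitzOnWith)
      ⟨by linarith [m.cast_nonneg (α := ℝ)], by linarith [m.cast_nonneg (α := ℝ)]⟩
      (fun t ht => ⟨hα m t ht, trivial⟩)
      (fun t ht => ⟨hα n t ⟨by linarith [ht.1], by linarith [ht.2]⟩, trivial⟩)
      (by rw [h0, h0])
  have hmem : ∀ t : ℝ, t ∈ Ioo (-((⌈|t|⌉₊ : ℝ) + 1)) (⌈|t|⌉₊ + 1) := by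
    intro t
    have := Nat.le_ceil |t|
    have := abs_le.1 this
    constructor <;> linarith [this.1, this.2]
  refine ⟨fun t => α ⌈|t|⌉₊ t, by simp [h0], fun t => ?_⟩
  set N := ⌈|t|⌉₊ with hN
  have ht := hmem t
  have heq : ∀ s ∈ Ioo (-((N : ℝ) + 1)) (N + 1), α ⌈|s|⌉₊ s = α N s := by
    intro s hs
    rcases le_total ⌈|s|⌉₊ N with hle | hle
    · exact agree _ _ hle (hmem s)
    · exact (agree _ _ hle hs).symm
  have hd := hα N t ht
  refine hd.congr_of_eventuallyEq ?_
  filter_upwards [Ioo_mem_nhds ht.1 ht.2] with s hs using heq s hs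

/-- The Pruefer vector field. -/
def qmF (ω : ℝ) (Q : ℝ → ℝ) (x θ : ℝ) : ℝ := ω * cos θ ^ 2 - Q x / ω * sin θ ^ 2

lemma qmF_lip {ω B : ℝ} {Q : ℝ → ℝ} (hω : 0 < ω) (hB : 0 ≤ B) (hQ : ∀ x, |Q x| ≤ B) (x : ℝ) :
    LipschitzWith (Real.toNNReal (2 * (ω + B / ω))) (qmF ω Q x) := by
  have hd : ∀ θ, HasDerivAt (qmF ω Q x) (-(2 * (ω + Q x / ω) * (sin θ * cos θ))) θ := by
    intro θ
    have h1 := ((hasDerivAt_cos θ).pow 2).const_mul ω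
    have h2 := ((hasDerivAt_sin θ).pow 2).const_mul (Q x / ω)
    exact (h1.sub h2).congr_deriv (by push_cast; ring)
  apply lipschitzWith_of_nnnorm_deriv_le (fun θ => (hd θ).differentiableAt)
  intro θ
  rw [(hd θ).deriv, ← NNReal.coe_le_coe, Real.coe_toNNReal _ (by positivity), coe_nnnorm,
    norm_neg, norm_mul, norm_mul, Real.norm_eq_abs, Real.norm_eq_abs, Real.norm_eq_abs]
  have h1 : |ω + Q x / ω| ≤ ω + B / ω := by
    refine (abs_add_le _ _).trans ?_
    rw [abs_of_pos hω, abs_div, abs_of_pos hω]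
    gcongr
    exact hQ x
  have h2 : |sin θ * cos θ| ≤ 1 := by
    rw [abs_mul]
    exact mul_le_one₀ (abs_sin_le_one θ) (abs_nonneg _) (abs_cos_le_one θ)
  have : |(2 : ℝ)| = 2 := by norm_num
  rw [this]
  calc 2 * |ω + Q x / ω| * |sin θ * cos θ| ≤ 2 * (ω + B / ω) * 1 := by gcongr
    _ = _ := mul_one _

lemma qmF_exists {ω B : ℝ} {Q : ℝ → ℝ} (hω : 0 < ω) (hB : 0 ≤ B) (hQ : ∀ x, |Q x| ≤ B)
    (hc : Continuous Q) (x0 : ℝ) :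
    ∃ θ : ℝ → ℝ, θ 0 = x0 ∧ ∀ t, HasDerivAt θ (qmF ω Q t (θ t)) t := by
  refine qm_global_ode (qmF ω Q) _ (Real.toNNReal (ω + B / ω)) (qmF_lip hω hB hQ) ?_ ?_ x0
  · intro x; unfold qmF; fun_prop
  · intro t x
    rw [Real.coe_toNNReal _ (by positivity)]
    unfold qmF
    refine (abs_sub _ _).trans ?_
    rw [abs_mul, abs_mul, abs_div, abs_of_pos hω, abs_of_nonneg (sq_nonneg (cos x)),
      abs_of_nonneg (sq_nonneg (sin x))]
    have h1 := cos_sq_le_one x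
    have h2 := sin_sq_le_one x
    have h3 : |Q t| / ω ≤ B / ω := by gcongr; exact hQ t
    have h4 : 0 ≤ |Q t| / ω := by positivity
    nlinarith [sq_nonneg (sin x), sq_nonneg (cos x)]

/-- Comparison for scalar ODEs. -/
lemma qm_compare {F : ℝ → ℝ → ℝ} {K : NNReal} (hK : ∀ t, LipschitzWith K (F t))
    {f f' g g' : ℝ → ℝ} {a b : ℝ} (hab : a ≤ b)
    (hf : ∀ t, HasDerivAt f (f' t) t) (hg : ∀ t, HasDerivAt g (g' t) t)
    (h1 : ∀ t ∈ Icc a b, f' t ≤ F t (f t)) (h2 : ∀ t ∈ Icc a b, F t (g t) ≤ g' t)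
    (ha : f a ≤ g a) : f b ≤ g b := by
  have key : ∀ ε > 0, f b - g b ≤ ε * exp ((K + 1) * (b - a)) := by
    intro ε hε
    refine image_le_of_deriv_right_lt_deriv_boundary (f := fun t => f t - g t)
      (f' := fun t => f' t - g' t) (a := a) (b := b)
      (B := fun t => ε * exp ((K + 1) * (t - a)))
      (B' := fun t => ε * (exp ((K + 1) * (t - a)) * (K + 1)))
      (fun x _ => ((hf x).sub (hg x)).continuousAt.continuousWithinAt)
      (fun x _ => ((hf x).sub (hg x)).hasDerivWithinAt) ?_ ?_ ?_ ⟨hab, le_rfl⟩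
    · simp; linarith
    · intro x
      have := ((((hasDerivAt_id x).sub_const a).const_mul ((K : ℝ) + 1)).exp).const_mul ε
      simpa using this
    · intro x hx heq
      have hx' : x ∈ Icc a b := ⟨hx.1, hx.2.le⟩
      have e := exp_pos (((K : ℝ) + 1) * (x - a))
      have l5 : 0 < ε * exp (((K : ℝ) + 1) * (x - a)) := by positivity
      have l := (hK x).dist_le_mul (f x) (g x)
      rw [Real.dist_eq, Real.dist_eq, heq, abs_of_pos l5] at l
      have l2 := le_abs_self (F x (f x) - F x (g x))
      have l3 := h1 x hx'
      have l4 := h2 x hx'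
      show f' x - g' x < _
      nlinarith
  by_contra hlt
  push Not at hlt
  have e := exp_pos (((K : ℝ) + 1) * (b - a))
  have := key ((f b - g b) / 2 / exp ((K + 1) * (b - a))) (by
    have : 0 < f b - g b := by linarith
    positivity)
  rw [div_mul_cancel₀ _ e.ne'] at this
  linarith

/-- The shooting argument: some energy `E` in `[1, 1 + 17 h]` has Pruefer angle at `b`
a multiple of `π`. -/
lemma qm_shoot {V : ℝ → ℝ} {B h b : ℝ} (hVc : Continuous V) (hVB : ∀ x, |V x| ≤ B)
    (hV1 : ∀ x ∈ Icc (-1 : ℝ) 1, V x = x ^ 2 + 1) (hh : 0 < h) (hh1 : h ≤ 1) (hb : 1 ≤ b) :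
    ∃ E ∈ Icc 1 (1 + 17 * h), ∃ θ : ℝ → ℝ, θ 0 = π / 2 ∧
      (∀ x, HasDerivAt θ (qmF (4 / √h) (fun x => (V x - E) / h ^ 2) x (θ x)) x) ∧
      sin (θ b) = 0 := by
  have hs : 0 < √h := Real.sqrt_pos.2 hh
  have hss : √h ^ 2 = h := Real.sq_sqrt hh.le
  have hs1 : √h ≤ 1 := Real.sqrt_le_one.2 hh1
  set ω := 4 / √h with hω
  have hω0 : 0 < ω := by positivity
  have hB0 : 0 ≤ B := (abs_nonneg _).trans (hVB 0)
  set Q : ℝ → ℝ → ℝ := fun E x => (V x - E) / h ^ 2 with hQ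
  have hQB : ∀ E x, |Q E x| ≤ (B + |E|) / h ^ 2 := by
    intro E x
    simp only [hQ]
    rw [abs_div, abs_of_pos (by positivity : (0 : ℝ) < h ^ 2)]
    gcongr
    exact (abs_sub _ _).trans (by linarith [hVB x])
  have hBE : ∀ E : ℝ, 0 ≤ (B + |E|) / h ^ 2 := fun E => by positivity
  have hQc : ∀ E, Continuous (Q E) := fun E => by simp only [hQ]; fun_prop
  have ex := fun E => qmF_exists hω0 (hBE E) (hQB E) (hQc E) (π / 2)
  choose Θ h0 hΘ using ex
  have lip := fun E => qmF_lip hω0 (hBE E) (hQB E)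
  have hΘc : ∀ E, Continuous (Θ E) := fun E =>
    continuous_iff_continuousAt.2 fun x => (hΘ E x).continuousAt
  -- continuity in the energy
  have hcont : Continuous (fun E => Θ E b) := by
    rw [continuous_iff_continuousAt]
    intro E0
    rw [ContinuousAt, tendsto_iff_dist_tendsto_zero]
    set K := Real.toNNReal (2 * (ω + (B + |E0|) / h ^ 2 / ω))
    have hbound : ∀ E, dist (Θ E b) (Θ E0 b) ≤
        gronwallBound 0 K (|E - E0| / h ^ 2 / ω + 0) (b - 0) := by
      intro E
      refine dist_le_of_approx_trajectories_ODE (v := qmF ω (Q E0)) (f := Θ E) (g := Θ E0)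
        (f' := fun x => qmF ω (Q E) x (Θ E x)) (g' := fun x => qmF ω (Q E0) x (Θ E0 x))
        (a := 0) (b := b) (lip E0) (hΘc E).continuousOn
        (fun t _ => (hΘ E t).hasDerivWithinAt) ?_ (hΘc E0).continuousOn
        (fun t _ => (hΘ E0 t).hasDerivWithinAt) (fun t _ => by simp) (by simp [h0]) b
        ⟨by linarith, le_rfl⟩
      intro t _
      rw [Real.dist_eq]
      have : qmF ω (Q E) t (Θ E t) - qmF ω (Q E0) t (Θ E t) =
          (E - E0) / h ^ 2 / ω * sin (Θ E t) ^ 2 := by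
        simp only [qmF, hQ]; ring
      rw [this, abs_mul, abs_div, abs_div, abs_of_pos hω0,
        abs_of_pos (by positivity : (0 : ℝ) < h ^ 2), abs_of_nonneg (sq_nonneg (sin _))]
      exact mul_le_of_le_one_right (by positivity) (sin_sq_le_one _)
    refine squeeze_zero (fun _ => dist_nonneg) hbound ?_
    have hc1 : Continuous (fun E : ℝ => gronwallBound 0 K (|E - E0| / h ^ 2 / ω + 0) (b - 0)) := by
      refine (gronwallBound_continuous_ε 0 K (b - 0)).comp ?_
      fun_prop
    have := hc1.tendsto E0
    simpa [gronwallBound_ε0_δ0] using this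
  -- lower energy
  have hlow : Θ 1 (√h) ≤ π / 2 := by
    refine qm_compare (lip 1) (f := Θ 1) (g := fun _ => π / 2) (g' := fun _ => 0)
      (a := 0) (b := √h) hs.le (hΘ 1) (fun t => hasDerivAt_const t _) (fun t _ => le_rfl) ?_
      (h0 1).le
    intro t ht
    have : V t = t ^ 2 + 1 := hV1 t ⟨by linarith [ht.1], ht.2.trans hs1⟩
    simp only [qmF, hQ, this]
    simp
    positivity
  set E1 := 1 + 17 * h with hE1
  have hup : 3 * π / 2 ≤ Θ E1 (√h) := by
    have := qm_mvt_le (f := fun x => π / 2 + x * ω) (f' := fun _ => ω) (g := Θ E1)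
      (a := 0) (b := √h) (fun x => by
        have := ((hasDerivAt_id x).mul_const ω).const_add (π / 2)
        simpa using this) (hΘ E1) hs.le (by simp [h0]) ?_
    · have h4 : √h * ω = 4 := by rw [hω]; field_simp
      have hp := Real.pi_le_four
      simp only [h4] at this
      linarith
    · intro t ht
      have hVt : V t = t ^ 2 + 1 := hV1 t ⟨by linarith [ht.1], ht.2.trans hs1⟩
      have hth : t ^ 2 ≤ h := by rw [← hss]; exact pow_le_pow_left₀ ht.1 ht.2 2
      have hω2 : ω * ω = 16 / h := by
        rw [hω]; field_simp; rw [hss]; ring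
      have hq : ω ≤ -(Q E1 t / ω) := by
        rw [← neg_div, le_div_iff₀ hω0, hω2]
        simp only [hQ, hVt, hE1]
        rw [← neg_div, div_le_div_iff₀ hh (by positivity)]
        nlinarith
      have := sin_sq_add_cos_sq (Θ E1 t)
      simp only [qmF]
      nlinarith [sq_nonneg (sin (Θ E1 t))]
  have hcmp : Θ 1 b + π ≤ Θ E1 b := by
    refine qm_compare (lip 1) (f := fun x => Θ 1 x + π)
      (g := Θ E1) (a := √h) (b := b) (hs1.trans hb) (fun t => (hΘ 1 t).add_const π) (hΘ E1)
      (fun t _ => ?_) (fun t _ => ?_) (by linarith)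
    · simp [qmF]
    · have : qmF ω (Q E1) t (Θ E1 t) - qmF ω (Q 1) t (Θ E1 t) =
          (E1 - 1) / h ^ 2 / ω * sin (Θ E1 t) ^ 2 := by
        simp only [qmF, hQ]; ring
      have h2 : 0 ≤ (E1 - 1) / h ^ 2 / ω * sin (Θ E1 t) ^ 2 := by
        have : 0 ≤ E1 - 1 := by rw [hE1]; linarith
        positivity
      linarith
  have hpi := Real.pi_pos
  set n := ⌈Θ 1 b / π⌉ with hn
  have hn1 : Θ 1 b ≤ n * π := by
    rw [← div_le_iff₀ hpi]; exact Int.le_ceil _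
  have hn2 : n * π ≤ Θ E1 b := by
    have : (n : ℝ) < Θ 1 b / π + 1 := Int.ceil_lt_add_one _
    have h3 : (n : ℝ) * π < (Θ 1 b / π + 1) * π := mul_lt_mul_of_pos_right this hpi
    have h4 : (Θ 1 b / π + 1) * π = Θ 1 b + π := by field_simp
    linarith
  have hE1' : (1 : ℝ) ≤ E1 := by rw [hE1]; linarith
  obtain ⟨E, hE, hEn⟩ := intermediate_value_Icc hE1' hcont.continuousOn ⟨hn1, hn2⟩
  refine ⟨E, hE, Θ E, h0 E, hΘ E, ?_⟩
  simp only at hEn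
  rw [hEn, Real.sin_int_mul_pi]

/-- An even solution vanishing at `b` and `-b`. -/
lemma qm_solution {V : ℝ → ℝ} {B h b : ℝ} (hVc : Continuous V) (hVB : ∀ x, |V x| ≤ B)
    (hVe : ∀ x, V (-x) = V x)
    (hV1 : ∀ x ∈ Icc (-1 : ℝ) 1, V x = x ^ 2 + 1) (hh : 0 < h) (hh1 : h ≤ 1) (hb : 1 ≤ b) :
    ∃ E ∈ Icc 1 (1 + 17 * h), ∃ u v : ℝ → ℝ, (∀ x, HasDerivAt u (v x) x) ∧
      (∀ x, HasDerivAt v ((V x - E) / h ^ 2 * u x) x) ∧ u 0 = 1 ∧ u b = 0 ∧ u (-b) = 0 := by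
  obtain ⟨E, hE, θ, h0, hθ, hsb⟩ := qm_shoot hVc hVB hV1 hh hh1 hb
  have hs : 0 < √h := Real.sqrt_pos.2 hh
  set ω := 4 / √h with hω
  have hω0 : 0 < ω := by positivity
  set Q : ℝ → ℝ := fun x => (V x - E) / h ^ 2 with hQ
  have hQB : ∀ x, |Q x| ≤ (B + |E|) / h ^ 2 := by
    intro x
    simp only [hQ]
    rw [abs_div, abs_of_pos (by positivity : (0 : ℝ) < h ^ 2)]
    gcongr
    exact (abs_sub _ _).trans (by linarith [hVB x])
  have hB0 : 0 ≤ B := (abs_nonneg _).trans (hVB 0)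
  have hBE : 0 ≤ (B + |E|) / h ^ 2 := by positivity
  have hQc : Continuous Q := by simp only [hQ]; fun_prop
  have hθc : Continuous θ := continuous_iff_continuousAt.2 fun x => (hθ x).continuousAt
  -- symmetry
  have hsym : (fun x => π - θ (-x)) = θ := by
    refine ODE_solution_unique_univ (v := qmF ω Q) (s := fun _ => univ) (t₀ := 0)
      (fun t => (qmF_lip hω0 hBE hQB t).lipschitzOnWith) (fun t => ⟨?_, trivial⟩)
      (fun t => ⟨hθ t, trivial⟩) (by simp [h0]; ring)
    have h1 := ((hθ (-t)).comp t (hasDerivAt_neg t)).const_sub π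
    refine h1.congr_deriv ?_
    simp [qmF, hQ, hVe]
  -- the amplitude
  set ρ : ℝ → ℝ := fun x => (ω + Q x / ω) * (sin (θ x) * cos (θ x)) with hρ
  have hρc : Continuous ρ := by simp only [hρ]; fun_prop
  set r : ℝ → ℝ := fun x => exp (∫ t in (0 : ℝ)..x, ρ t) with hr
  have hrd : ∀ x, HasDerivAt r (r x * ρ x) x := by
    intro x
    exact (intervalIntegral.integral_hasDerivAt_right (hρc.intervalIntegrable _ _)
      (hρc.stronglyMeasurableAtFilter _ _) hρc.continuousAt).exp
  refine ⟨E, hE, fun x => r x * sin (θ x), fun x => ω * (r x * cos (θ x)), ?_, ?_, ?_, ?_, ?_⟩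
  · intro x
    refine ((hrd x).mul (hθ x).sin).congr_deriv ?_
    simp only [hρ, qmF]
    have := cos_sq' (θ x)
    have hc3 : cos (θ x) ^ 3 = cos (θ x) * (1 - sin (θ x) ^ 2) := by rw [← this]; ring
    ring_nf
    rw [hc3]
    ring
  · intro x
    refine (((hrd x).mul (hθ x).cos).const_mul ω).congr_deriv ?_
    simp only [hρ, qmF]
    have h1 := cos_sq' (θ x)
    show _ = Q x * _
    have hω1 : ω * ω⁻¹ = 1 := mul_inv_cancel₀ hω0.ne'
    have : ω * (r x * ((ω + Q x / ω) * (sin (θ x) * cos (θ x))) * cos (θ x) +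
        r x * (-sin (θ x) * (ω * cos (θ x) ^ 2 - Q x / ω * sin (θ x) ^ 2)))
        = (ω * ω⁻¹) * Q x * r x * sin (θ x) * (cos (θ x) ^ 2 + sin (θ x) ^ 2) := by
      ring
    rw [this, hω1, cos_sq_add_sin_sq]; ring
  · simp [hr, h0]
  · simp [hsb]
  · have : θ (-b) = π - θ b := by
      have := congrFun hsym (-b); simp at this; linarith
    simp [this, hsb]

/-- Solutions are smooth. -/
lemma qm_smooth {u v q : ℝ → ℝ} (hq : ContDiff ℝ (⊤ : ℕ∞) q)
    (hu : ∀ x, HasDerivAt u (v x) x) (hv : ∀ x, HasDerivAt v (q x * u x) x) :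
    ContDiff ℝ (⊤ : ℕ∞) u ∧ ContDiff ℝ (⊤ : ℕ∞) v := by
  have du : deriv u = v := funext fun x => (hu x).deriv
  have dv : deriv v = fun x => q x * u x := funext fun x => (hv x).deriv
  have key : ∀ n : ℕ, ContDiff ℝ n u ∧ ContDiff ℝ n v := by
    intro n
    induction n with
    | zero =>
      constructor
      · exact contDiff_zero.2 (continuous_iff_continuousAt.2 fun x => (hu x).continuousAt)
      · exact contDiff_zero.2 (continuous_iff_continuousAt.2 fun x => (hv x).continuousAt)
    | succ n ih =>
      constructor
      · push_cast
        refine contDiff_succ_iff_deriv.2 ⟨fun x => (hu x).differentiableAt, by simp, ?_⟩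
        rw [du]; exact ih.2
      · push_cast
        refine contDiff_succ_iff_deriv.2 ⟨fun x => (hv x).differentiableAt, by simp, ?_⟩
        rw [dv]; exact (hq.of_le (by exact_mod_cast le_top)).mul ih.1
  exact ⟨contDiff_infty.2 fun n => (key n).1, contDiff_infty.2 fun n => (key n).2⟩

/-- A cutoff function. -/
lemma qm_cutoff {R : ℝ} (hR : 5 < R) : ∃ η : ℝ → ℝ, ContDiff ℝ (⊤ : ℕ∞) η ∧
    HasCompactSupport η ∧ (∀ x, |x| ≤ R - 1 → η x = 1) ∧
    (∀ x, ¬ (R - 1 < |x| ∧ |x| < R + 1) → deriv η x = 0 ∧ deriv (deriv η) x = 0) ∧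
    ∃ C, 0 ≤ C ∧ ∀ x, |deriv η x| ≤ C ∧ |deriv (deriv η) x| ≤ C := by
  let φ : ContDiffBump (0 : ℝ) := ⟨R - 1 / 2, R + 1 / 2, by linarith, by linarith⟩
  have hφ : ContDiff ℝ (⊤ : ℕ∞) φ := φ.contDiff
  have hφ1 : ContDiff ℝ (⊤ : ℕ∞) (deriv φ) := (contDiff_infty_iff_deriv.1 hφ).2
  have hφ2 : ContDiff ℝ (⊤ : ℕ∞) (deriv (deriv φ)) := (contDiff_infty_iff_deriv.1 hφ1).2
  have hone : ∀ x, |x| ≤ R - 1 / 2 → φ x = 1 := fun x hx =>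
    φ.one_of_mem_closedBall (by rw [Metric.mem_closedBall, Real.dist_eq, sub_zero]; exact hx)
  have hzero : ∀ x, R + 1 / 2 ≤ |x| → φ x = 0 := fun x hx =>
    φ.zero_of_le_dist (by rw [Real.dist_eq, sub_zero]; exact hx)
  have hd : ∀ (c : ℝ) (x : ℝ), (φ : ℝ → ℝ) =ᶠ[nhds x] (fun _ => c) →
      deriv φ x = 0 ∧ deriv (deriv φ) x = 0 := by
    intro c x hx
    refine ⟨by rw [hx.deriv_eq]; simp, ?_⟩
    rw [hx.deriv.deriv_eq]; simp
  obtain ⟨C1, h1⟩ := φ.hasCompactSupport.deriv.exists_bound_of_continuous hφ1.continuous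
  obtain ⟨C2, h2⟩ := φ.hasCompactSupport.deriv.deriv.exists_bound_of_continuous hφ2.continuous
  refine ⟨φ, hφ, φ.hasCompactSupport, fun x hx => hone x (by linarith), ?_, max C1 C2,
    ((norm_nonneg _).trans (h1 0)).trans (le_max_left _ _),
    fun x => ⟨(h1 x).trans (le_max_left _ _), (h2 x).trans (le_max_right _ _)⟩⟩
  intro x hx
  by_cases hx1 : R - 1 < |x|
  · have hx2 : R + 1 / 2 < |x| := by
      by_contra h
      exact hx ⟨hx1, by linarith⟩
    apply hd 0
    filter_upwards [(isOpen_lt continuous_const continuous_abs).mem_nhds hx2] with y hy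
    exact hzero y (le_of_lt hy)
  · have hx2 : |x| < R - 1 / 2 := by linarith
    apply hd 1
    filter_upwards [(isOpen_lt continuous_abs continuous_const).mem_nhds hx2] with y hy
    exact hone y (le_of_lt hy)

/-- Combined estimate to the right of the barrier. -/
lemma qm_right {V V' u v : ℝ → ℝ} {R h σ M E : ℝ} (hR : 5 < R) (hσ : σ = 1 / (32 * R))
    (hV_slope : ∀ x ∈ Set.Icc (2 : ℝ) 3.5, V x = 4 - x)
    (hV_lt : ∀ x : ℝ, 3 < x → V x < 1)
    (hV : ∀ x, HasDerivAt V (V' x) x) (hM : ∀ x, |V' x| ≤ M)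
    (hh : 0 < h) (hhσ : h ≤ σ ^ 2 / 17) (hE : E ∈ Icc 1 (1 + 17 * h))
    (hu : ∀ x, HasDerivAt u (v x) x)
    (hv : ∀ x, HasDerivAt v ((V x - E) / h ^ 2 * u x) x) (hub : u (3 - σ ^ 2) = 0)
    {x : ℝ} (hx : x ∈ Icc (3 - σ ^ 2) (R + 1)) :
    h ^ 2 * v x ^ 2 + σ ^ 2 * u x ^ 2 ≤
      h ^ 2 * (64 * exp (M * R / σ ^ 2) * exp (-1 / (16 * h))) *
        ∫ x in (2 : ℝ)..(9 / 4), u x ^ 2 := by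
  have hσ0 : 0 < σ := by rw [hσ]; positivity
  have hσ1 : σ ≤ 1 / 160 := by
    rw [hσ]; apply one_div_le_one_div_of_le <;> linarith
  have hσ2 : σ ^ 2 ≤ 1 / 25600 := by
    calc σ ^ 2 ≤ (1 / 160) ^ 2 := pow_le_pow_left₀ hσ0.le hσ1 2
      _ = _ := by norm_num
  have hσp : 0 < σ ^ 2 := by positivity
  have hM0 : 0 ≤ M := (abs_nonneg _).trans (hM 0)
  have hh2 : 0 < h ^ 2 := by positivity
  have hdec := qm_decay (κ := 1 / (4 * h)) hu hv (b := 3 - σ ^ 2) (by linarith) hub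
    (by
      intro y hy
      have := hV_slope y ⟨hy.1, by norm_num; linarith [hy.2]⟩
      apply div_nonneg _ hh2.le
      rw [this]; linarith [hy.2, hE.2])
    (by
      intro y hy
      have := hV_slope y ⟨by linarith [hy.1], by norm_num; linarith [hy.2]⟩
      rw [this, le_div_iff₀ hh2]
      have : (1 / (4 * h)) ^ 2 * h ^ 2 = 1 / 16 := by field_simp; norm_num
      rw [this]; linarith [hy.2, hE.2])
  have hgr := qm_growth hh hσ0 hu hv hub hV hM (T := R + 1) (by
    intro y hy
    rcases le_or_gt y 3 with h3 | h3
    · have := hV_slope y ⟨by linarith [hy.1], by norm_num; linarith⟩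
      rw [this]; linarith [hy.1, hE.1]
    · have := hV_lt y h3
      linarith [hE.1]) hx
  set I := ∫ x in (2 : ℝ)..(9 / 4), u x ^ 2 with hI
  have hI0 : 0 ≤ I := intervalIntegral.integral_nonneg (by norm_num) (fun x _ => sq_nonneg _)
  have hlen : x - (3 - σ ^ 2) ≤ R := by linarith [hx.2]
  have hlen0 : 0 ≤ x - (3 - σ ^ 2) := by linarith [hx.1]
  have hexp : exp ((2 * σ / h + M / σ ^ 2) * (x - (3 - σ ^ 2))) ≤
      exp (1 / (16 * h) + M * R / σ ^ 2) := by
    apply exp_le_exp.2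
    calc _ ≤ (2 * σ / h + M / σ ^ 2) * R := by gcongr
      _ = 1 / (16 * h) + M * R / σ ^ 2 := by
        have : 2 * σ / h * R = 1 / (16 * h) := by rw [hσ]; field_simp; norm_num
        rw [add_mul, this]; ring
  have hsplit : exp (-(1 / (4 * h)) / 2) * exp (1 / (16 * h) + M * R / σ ^ 2)
      = exp (M * R / σ ^ 2) * exp (-1 / (16 * h)) := by
    rw [← exp_add, ← exp_add]
    congr 1
    field_simp
    ring
  calc _ ≤ _ := hgr
    _ ≤ h ^ 2 * (64 * exp (-(1 / (4 * h)) / 2) * I) * exp (1 / (16 * h) + M * R / σ ^ 2) := by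
        gcongr
    _ = h ^ 2 * (64 * (exp (-(1 / (4 * h)) / 2) * exp (1 / (16 * h) + M * R / σ ^ 2))) * I := by
        ring
    _ = _ := by rw [hsplit]; ring

/-- The `L²` norm of `u` over the set `I`. -/
def l2Norm (I : Set ℝ) (u : ℝ → ℝ) : ℝ :=
  Real.sqrt (∫ x in I, ‖u x‖ ^ 2)

set_option maxHeartbeats 2000000 in
/-- For the one-dimensional potential `V` as in the context and any `R > 5`,
there are `c > 0`, `C > 0`, `h₀ > 0` such that for all `0 < h < h₀` there exist
`E₀ = E₀(h)` with `|E₀ - 1| ≤ C h` and `u, f ∈ C_c^∞(ℝ)` with `(P(h) - E₀) u = f`,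
`f` supported in `{R - 1 < |x| < R + 1}`, `‖χ u‖_{L²} = 1` and `‖f‖_{L²} ≤ e^{-c/h}`. -/
theorem one_dim_quasimode_with_remote_forcing
    (V : ℝ → ℝ)
    (hV_smooth : ContDiff ℝ (⊤ : ℕ∞) V) (hV_comp : HasCompactSupport V)
    (hV_nonneg : ∀ x, 0 ≤ V x) (hV_even : ∀ x, V (-x) = V x)
    (hV_inner : ∀ x ∈ Set.Icc (-1 : ℝ) 1, V x = x ^ 2 + 1)
    (hV_slope : ∀ x ∈ Set.Icc (2 : ℝ) 3.5, V x = 4 - x)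
    (hV_lt : ∀ x : ℝ, 3 < x → V x < 1)
    (hV_supp : tsupport V ⊆ Set.Icc (-5 : ℝ) 5)
    (R : ℝ) (hR : 5 < R) :
    ∃ c > (0 : ℝ), ∃ C > (0 : ℝ), ∃ h₀ > (0 : ℝ), ∀ h : ℝ, 0 < h → h < h₀ →
      ∃ E₀ : ℝ, ∃ u f : ℝ → ℝ,
        |E₀ - 1| ≤ C * h ∧
        ContDiff ℝ (⊤ : ℕ∞) u ∧ HasCompactSupport u ∧
        ContDiff ℝ (⊤ : ℕ∞) f ∧ HasCompactSupport f ∧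
        (∀ x : ℝ, -h ^ 2 * deriv (deriv u) x + (V x - E₀) * u x = f x) ∧
        (∀ x : ℝ, f x ≠ 0 → R - 1 < |x| ∧ |x| < R + 1) ∧
        l2Norm (Set.Icc (-4 : ℝ) 4) u = 1 ∧
        l2Norm Set.univ f ≤ Real.exp (-c / h) := by
  have hVc : Continuous V := hV_smooth.continuous
  obtain ⟨B, hB⟩ := hV_comp.exists_bound_of_continuous hVc
  have hV1 : ContDiff ℝ (⊤ : ℕ∞) (deriv V) := (contDiff_infty_iff_deriv.1 hV_smooth).2
  have hVd : ∀ x, HasDerivAt V (deriv V x) x := fun x =>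
    ((contDiff_infty_iff_deriv.1 hV_smooth).1 x).hasDerivAt
  obtain ⟨M, hM⟩ := hV_comp.deriv.exists_bound_of_continuous hV1.continuous
  obtain ⟨η, hη, hηc, hη1, hηs, D, hD0, hD⟩ := qm_cutoff hR
  obtain ⟨σ, hσ⟩ : ∃ σ : ℝ, σ = 1 / (32 * R) := ⟨_, rfl⟩
  have hR0 : 0 < R := by linarith
  have hσ0 : 0 < σ := by rw [hσ]; positivity
  have hσ1 : σ ≤ 1 / 160 := by
    rw [hσ]; apply one_div_le_one_div_of_le <;> linarith
  have hσ2 : σ ^ 2 ≤ 1 / 25600 := by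
    calc σ ^ 2 ≤ (1 / 160) ^ 2 := pow_le_pow_left₀ hσ0.le hσ1 2
      _ = _ := by norm_num
  set K0 := 64 * exp (M * R / σ ^ 2) with hK0
  have hK0p : 0 < K0 := by positivity
  set W := 2 * (R + 1) * ((D * (1 / σ + 2)) ^ 2 * K0) with hW
  have hW0 : 0 ≤ W := by positivity
  refine ⟨1 / 64, by norm_num, 17, by norm_num,
    min (σ ^ 2 / 17) (1 / (32 * (W + 1))), by positivity, ?_⟩
  intro h hh hlt
  have hhσ : h ≤ σ ^ 2 / 17 := hlt.le.trans (min_le_left _ _)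
  have hhW : h ≤ 1 / (32 * (W + 1)) := hlt.le.trans (min_le_right _ _)
  have hh1 : h ≤ 1 := by linarith
  obtain ⟨E, hE, u, v, hu, hv, hu0, hub, hub'⟩ := qm_solution hVc hB hV_even hV_inner hh hh1
    (b := 3 - σ ^ 2) (by linarith)
  have hq : ContDiff ℝ (⊤ : ℕ∞) (fun x => (V x - E) / h ^ 2) :=
    (hV_smooth.sub contDiff_const).div_const _
  obtain ⟨hus, hvs⟩ := qm_smooth hq hu hv
  have huc := hus.continuous
  -- norms
  obtain ⟨S, hS⟩ : ∃ S : ℝ, S = ∫ x in (-4 : ℝ)..4, u x ^ 2 := ⟨_, rfl⟩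
  have hS0 : 0 < S := by
    rw [hS]
    exact intervalIntegral.integral_pos (by norm_num) (huc.pow 2).continuousOn
      (fun x _ => sq_nonneg _) ⟨0, by norm_num, by simp [hu0]⟩
  have hIR : ∫ x in (2 : ℝ)..(9 / 4), u x ^ 2 ≤ S := by
    rw [hS]
    exact intervalIntegral.integral_mono_interval (by norm_num) (by norm_num) (by norm_num)
      (Filter.Eventually.of_forall fun x => sq_nonneg _) ((huc.pow 2).intervalIntegrable _ _)
  have hIL : ∫ x in (2 : ℝ)..(9 / 4), u (-x) ^ 2 ≤ S := by
    rw [hS, intervalIntegral.integral_comp_neg (fun x => u x ^ 2)]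
    exact intervalIntegral.integral_mono_interval (by norm_num) (by norm_num) (by norm_num)
      (Filter.Eventually.of_forall fun x => sq_nonneg _) ((huc.pow 2).intervalIntegrable _ _)
  set ε := exp (-1 / (16 * h)) with hε
  have hε0 : 0 < ε := exp_pos _
  -- estimates on both sides
  have hest : ∀ x, R - 1 < |x| → |x| < R + 1 →
      h ^ 2 * v x ^ 2 + σ ^ 2 * u x ^ 2 ≤ h ^ 2 * (K0 * ε) * S := by
    intro x hx1 hx2
    rcases le_total 0 x with h0 | h0
    · rw [abs_of_nonneg h0] at hx1 hx2
      have := qm_right hR hσ hV_slope hV_lt hVd hM hh hhσ hE hu hv hub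
        (x := x) ⟨by linarith [sq_nonneg σ], hx2.le⟩
      exact this.trans (mul_le_mul_of_nonneg_left hIR (by positivity))
    · rw [abs_of_nonpos h0] at hx1 hx2
      have hu' : ∀ x, HasDerivAt (fun x => u (-x)) (-v (-x)) x := fun x =>
        ((hu (-x)).comp x (hasDerivAt_neg x)).congr_deriv (by ring)
      have hv' : ∀ x, HasDerivAt (fun x => -v (-x)) ((V x - E) / h ^ 2 * u (-x)) x := fun x =>
        (((hv (-x)).comp x (hasDerivAt_neg x)).neg).congr_deriv (by rw [hV_even]; ring)
      have := qm_right hR hσ hV_slope hV_lt hVd hM hh hhσ hE hu' hv' hub'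
        (x := -x) ⟨by linarith [sq_nonneg σ], hx2.le⟩
      simp only [neg_neg, neg_sq] at this
      exact this.trans (mul_le_mul_of_nonneg_left hIL (by positivity))
  have hη1s : ContDiff ℝ (⊤ : ℕ∞) (deriv η) := (contDiff_infty_iff_deriv.1 hη).2
  have hη2s : ContDiff ℝ (⊤ : ℕ∞) (deriv (deriv η)) := (contDiff_infty_iff_deriv.1 hη1s).2
  have hηd : ∀ x, HasDerivAt η (deriv η x) x := fun x =>
    ((contDiff_infty_iff_deriv.1 hη).1 x).hasDerivAt
  have hηdd : ∀ x, HasDerivAt (deriv η) (deriv (deriv η) x) x := fun x =>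
    ((contDiff_infty_iff_deriv.1 hη1s).1 x).hasDerivAt
  have hsS : 0 < √S := Real.sqrt_pos.2 hS0
  have hsS2 : √S ^ 2 = S := Real.sq_sqrt hS0.le
  have hUd : ∀ x, HasDerivAt (fun x => η x * (u x / √S))
      (deriv η x * (u x / √S) + η x * (v x / √S)) x := fun x =>
    (hηd x).mul ((hu x).div_const _)
  have hUdd : ∀ x, HasDerivAt (fun x => deriv η x * (u x / √S) + η x * (v x / √S))
      (deriv (deriv η) x * (u x / √S) + 2 * deriv η x * (v x / √S)
        + η x * ((V x - E) / h ^ 2 * u x / √S)) x := fun x =>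
    (((hηdd x).mul ((hu x).div_const _)).add ((hηd x).mul ((hv x).div_const _))).congr_deriv
      (by ring)
  have hfs : ∀ x : ℝ, -h ^ 2 * (deriv (deriv η) x * (u x / √S) + 2 * deriv η x * (v x / √S)) ≠ 0 →
      R - 1 < |x| ∧ |x| < R + 1 := by
    intro x hx
    by_contra hcon
    obtain ⟨h1, h2⟩ := hηs x hcon
    simp [h1, h2] at hx
  refine ⟨E, fun x => η x * (u x / √S),
    fun x => -h ^ 2 * (deriv (deriv η) x * (u x / √S) + 2 * deriv η x * (v x / √S)),
    ?_, ?_, ?_, ?_, ?_, ?_, hfs, ?_, ?_⟩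
  · rw [abs_of_nonneg (by linarith [hE.1])]; linarith [hE.2]
  · exact hη.mul (hus.div_const _)
  · exact hηc.mul_right
  · exact contDiff_const.mul ((hη2s.mul (hus.div_const _)).add
      ((contDiff_const.mul hη1s).mul (hvs.div_const _)))
  · refine HasCompactSupport.intro (isCompact_Icc (a := -(R + 1)) (b := R + 1)) ?_
    intro x hx
    by_contra hne
    have := abs_lt.1 (hfs x hne).2
    exact hx ⟨this.1.le, this.2.le⟩
  · intro x
    have e1 : deriv (fun x => η x * (u x / √S)) =
      fun x => deriv η x * (u x / √S) + η x * (v x / √S) := funext fun x => (hUd x).deriv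
    rw [e1, (hUdd x).deriv]
    field_simp
    ring
  · unfold l2Norm
    have : ∫ x in Icc (-4 : ℝ) 4, ‖η x * (u x / √S)‖ ^ 2 = ∫ x in Icc (-4 : ℝ) 4, u x ^ 2 / S := by
      apply setIntegral_congr_fun measurableSet_Icc
      intro x hx
      have h1 : η x = 1 := hη1 x (by rw [abs_le]; constructor <;> linarith [hx.1, hx.2])
      simp only [h1, one_mul, Real.norm_eq_abs, sq_abs, div_pow, hsS2]
    rw [this, integral_Icc_eq_integral_Ioc, ← intervalIntegral.integral_of_le (by norm_num),
      intervalIntegral.integral_div, ← hS, div_self hS0.ne', Real.sqrt_one]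
  · unfold l2Norm
    set f : ℝ → ℝ :=
      fun x => -h ^ 2 * (deriv (deriv η) x * (u x / √S) + 2 * deriv η x * (v x / √S)) with hf
    have hpt : ∀ x, f x ≠ 0 → f x ^ 2 ≤ (D * (1 / σ + 2)) ^ 2 * (K0 * ε) := by
      intro x hx
      obtain ⟨h1, h2⟩ := hfs x hx
      have h3 := hest x h1 h2
      have hA : √(K0 * ε) ^ 2 = K0 * ε := Real.sq_sqrt (by positivity)
      have hA0 : 0 ≤ √(K0 * ε) := Real.sqrt_nonneg _
      set A := √(K0 * ε)
      have h4 : h ^ 2 * (v x / √S) ^ 2 + σ ^ 2 * (u x / √S) ^ 2 ≤ h ^ 2 * A ^ 2 := by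
        rw [div_pow, div_pow, hsS2, hA]
        have : h ^ 2 * (v x ^ 2 / S) + σ ^ 2 * (u x ^ 2 / S) =
          (h ^ 2 * v x ^ 2 + σ ^ 2 * u x ^ 2) / S := by ring
        rw [this, div_le_iff₀ hS0]; exact h3
      have h5 : |v x / √S| ≤ A := by
        apply abs_le_of_sq_le_sq _ hA0
        have : h ^ 2 * (v x / √S) ^ 2 ≤ h ^ 2 * A ^ 2 := by
          nlinarith [sq_nonneg (σ * (u x / √S))]
        exact le_of_mul_le_mul_left this (by positivity)
      have h6 : |u x / √S| ≤ 1 / σ * A := by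
        apply abs_le_of_sq_le_sq _ (by positivity)
        have h7 : σ ^ 2 * (u x / √S) ^ 2 ≤ σ ^ 2 * (1 / σ * A) ^ 2 := by
          have e : σ ^ 2 * (1 / σ * A) ^ 2 = A ^ 2 := by field_simp
          have : h ^ 2 * A ^ 2 ≤ 1 * A ^ 2 := by
            gcongr
            exact pow_le_one₀ hh.le hh1
          rw [e]
          nlinarith [sq_nonneg (h * (v x / √S))]
        exact le_of_mul_le_mul_left h7 (by positivity)
      have h8 : |f x| ≤ D * (1 / σ + 2) * A := by
        simp only [hf]
        rw [abs_mul, abs_neg, abs_of_pos (by positivity : (0 : ℝ) < h ^ 2)]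
        have h9 : |deriv (deriv η) x * (u x / √S) + 2 * deriv η x * (v x / √S)| ≤
            D * (1 / σ * A) + 2 * D * A := by
          refine (abs_add_le _ _).trans ?_
          rw [abs_mul, abs_mul, abs_mul, abs_two]
          have := (hD x).1
          have := (hD x).2
          gcongr
        calc _ ≤ 1 * (D * (1 / σ * A) + 2 * D * A) := by
              gcongr
              exact pow_le_one₀ hh.le hh1
          _ = _ := by ring
      calc f x ^ 2 = |f x| ^ 2 := (sq_abs _).symm
        _ ≤ (D * (1 / σ + 2) * A) ^ 2 := pow_le_pow_left₀ (abs_nonneg _) h8 2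
        _ = _ := by rw [mul_pow, hA]
    set Y := (D * (1 / σ + 2)) ^ 2 * (K0 * ε) with hY
    have hY0 : 0 ≤ Y := by positivity
    have hfint : ∫ x in (univ : Set ℝ), ‖f x‖ ^ 2 ≤ 2 * (R + 1) * Y := by
      have hle : ∫ x in (univ : Set ℝ), ‖f x‖ ^ 2 ≤
          ∫ x, (Icc (-(R + 1)) (R + 1)).indicator (fun _ => Y) x := by
        rw [Measure.restrict_univ]
        apply integral_mono_of_nonneg
        · exact Filter.Eventually.of_forall fun x => by positivity
        · rw [integrable_indicator_iff measurableSet_Icc]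
          exact integrableOn_const (by simp)
        · refine Filter.Eventually.of_forall fun x => ?_
          simp only [Real.norm_eq_abs, sq_abs]
          by_cases hx : f x = 0
          · rw [hx]; simp only [ne_eq, OfNat.ofNat_ne_zero, not_false_eq_true, zero_pow]
            exact indicator_nonneg (fun _ _ => hY0) x
          · have h1 := abs_lt.1 (hfs x hx).2
            rw [indicator_of_mem (show x ∈ Icc (-(R + 1)) (R + 1) from ⟨h1.1.le, h1.2.le⟩)]
            exact hpt x hx
      refine hle.trans (le_of_eq ?_)
      rw [integral_indicator measurableSet_Icc, setIntegral_const]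
      simp only [measureReal_def, Real.volume_Icc, smul_eq_mul]
      rw [ENNReal.toReal_ofReal (by linarith)]
      ring
    have hWe : W ≤ exp (1 / (32 * h)) := by
      have h1 : W + 1 ≤ 1 / (32 * h) := by
        rw [le_div_iff₀ (by positivity)]
        rw [le_div_iff₀ (by positivity)] at hhW
        linarith
      linarith [add_one_le_exp (1 / (32 * h))]
    have hfin : 2 * (R + 1) * Y ≤ exp (-(1 / 64) / h) ^ 2 := by
      have e1 : exp (-(1 / 64) / h) ^ 2 = exp (1 / (32 * h)) * ε := by
        rw [hε, ← exp_nat_mul, ← exp_add]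
        congr 1
        field_simp
        norm_num
      have e2 : 2 * (R + 1) * Y = W * ε := by rw [hY, hW]; ring
      rw [e1, e2]
      gcongr
    rw [Real.sqrt_le_left (exp_pos _).le]
    exact hfint.trans hfin
end
end

section
/- There exist C > 0 and h₀ > 0 such that for every h ∈ (0,h₀) and every R̃ ∈ [R, R+1] there exist E₀ ∈ ℝ and v ∈ C^∞([−R̃, R̃]) satisfying: (P(h) − E₀)v = 0 on [−R̃,R̃]; v(R̃) = v(−R̃) = 0; ‖v‖_{L²(−R̃,R̃)} = 1; ‖v‖_{H¹_h(−R̃,R̃)} ≤ C; and |E₀ − (1 + h)| ≤ C e^{−1/(10h)}. -/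
open MeasureTheory Set Real

noncomputable section

/-- The semiclassical `H¹_h` norm of `u` (with derivative `u'`) over the set `I`. -/
def h1Norm (h : ℝ) (I : Set ℝ) (u u' : ℝ → ℝ) : ℝ :=
  Real.sqrt ((∫ x in I, ‖u x‖ ^ 2) + ∫ x in I, ‖h * u' x‖ ^ 2)

lemma aux_global_ode (f : ℝ → ℝ → ℝ) (K L : NNReal) (hLip : ∀ t, LipschitzWith K (f t))
    (hc : ∀ x, Continuous (fun t => f t x)) (hb : ∀ t x, ‖f t x‖ ≤ L) (x0 : ℝ) :
    ∃ θ : ℝ → ℝ, θ 0 = x0 ∧ ∀ t, HasDerivAt θ (f t (θ t)) t := by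
  have hloc : ∀ n : ℕ, ∃ θ : ℝ → ℝ, θ 0 = x0 ∧
      ∀ t ∈ Ioo (-((n : ℝ) + 1)) ((n : ℝ) + 1), HasDerivAt θ (f t (θ t)) t := by
    intro n
    have h0 : (0 : ℝ) ∈ Icc (-((n : ℝ) + 1)) ((n : ℝ) + 1) := by
      constructor <;> linarith [Nat.cast_nonneg (α := ℝ) n]
    have hPL : IsPicardLindelof f (⟨0, h0⟩ : Icc (-((n : ℝ) + 1)) ((n : ℝ) + 1)) x0
        (L * (n + 1)) 0 L K :=
      { lipschitzOnWith := fun t _ => (hLip t).lipschitzOnWith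
        continuousOn := fun x _ => (hc x).continuousOn
        norm_le := fun t _ x _ => hb t x
        mul_max_le := by simp }
    obtain ⟨θ, h1, h2⟩ := hPL.exists_eq_forall_mem_Icc_hasDerivWithinAt₀
    refine ⟨θ, h1, fun t ht => (h2 t (Ioo_subset_Icc_self ht)).hasDerivAt (Icc_mem_nhds ht.1 ht.2)⟩
  choose Θ h0 h1 using hloc
  have hagree : ∀ m n : ℕ, m ≤ n → ∀ t ∈ Ioo (-((m : ℝ) + 1)) ((m : ℝ) + 1), Θ m t = Θ n t := by
    intro m n hmn t ht
    have hmn' : (m : ℝ) ≤ n := by exact_mod_cast hmn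
    have hm0 := Nat.cast_nonneg (α := ℝ) m
    exact ODE_solution_unique_of_mem_Ioo (v := f) (s := fun _ => univ) (K := K)
      (fun t _ => (hLip t).lipschitzOnWith) (t₀ := 0) (by constructor <;> linarith)
      (fun t ht => ⟨h1 m t ht, trivial⟩)
      (fun t ht => ⟨h1 n t ⟨by linarith [ht.1], by linarith [ht.2]⟩, trivial⟩)
      ((h0 m).trans (h0 n).symm) ht
  refine ⟨fun t => Θ (⌈|t|⌉₊) t, by simpa using h0 _, fun t => ?_⟩
  set N := ⌈|t|⌉₊ + 1 with hN
  have key : ∀ s ∈ Ioo (-((⌈|t|⌉₊ : ℝ) + 1)) ((⌈|t|⌉₊ : ℝ) + 1), Θ (⌈|s|⌉₊) s = Θ N s := by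
    intro s hs
    have : |s| < (⌈|t|⌉₊ : ℝ) + 1 := abs_lt.2 hs
    have h3 : ⌈|s|⌉₊ ≤ N := by
      apply Nat.ceil_le.2; rw [hN]; push_cast; exact this.le
    apply hagree _ _ h3
    have := Nat.le_ceil |s|
    have := abs_lt.1 (lt_of_le_of_lt this (lt_add_one _))
    exact this
  have ht : t ∈ Ioo (-((⌈|t|⌉₊ : ℝ) + 1)) ((⌈|t|⌉₊ : ℝ) + 1) := by
    have := Nat.le_ceil |t|
    exact abs_lt.1 (lt_of_le_of_lt this (lt_add_one _))
  have hd : HasDerivAt (Θ N) (f t (Θ N t)) t := by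
    apply h1
    rw [hN]; push_cast
    exact ⟨by linarith [ht.1], by linarith [ht.2]⟩
  have : (fun t => Θ (⌈|t|⌉₊) t) =ᶠ[nhds t] Θ N := by
    filter_upwards [Ioo_mem_nhds ht.1 ht.2] with s hs using key s hs
  have h4 := hd.congr_of_eventuallyEq this
  rw [← key t ht] at h4
  exact h4

/-- Pruefer vector field. -/
def prF (Q : ℝ → ℝ) (x θ : ℝ) : ℝ := cos θ ^ 2 + Q x * sin θ ^ 2

lemma sin_sq_lip (a b : ℝ) : |sin a ^ 2 - sin b ^ 2| ≤ 2 * |a - b| := by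
  have h1 : |sin a - sin b| ≤ |a - b| := by
    have := Real.lipschitzWith_sin.dist_le_mul a b
    simpa [Real.dist_eq] using this
  have h2 : |sin a + sin b| ≤ 2 := by
    rw [abs_le]; constructor <;> linarith [neg_one_le_sin a, neg_one_le_sin b, sin_le_one a, sin_le_one b]
  calc |sin a ^ 2 - sin b ^ 2| = |sin a + sin b| * |sin a - sin b| := by rw [← abs_mul]; ring_nf
    _ ≤ 2 * |a - b| := by gcongr

lemma prF_lip (Q : ℝ → ℝ) (B : ℝ) (hB : ∀ x, |Q x| ≤ B) (x a b : ℝ) :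
    |prF Q x a - prF Q x b| ≤ (2 * (B + 1)) * |a - b| := by
  have h : prF Q x a - prF Q x b = (Q x - 1) * (sin a ^ 2 - sin b ^ 2) := by
    unfold prF; rw [cos_sq', cos_sq']; ring
  have h2 : |Q x - 1| ≤ B + 1 := by
    have := abs_sub (Q x) 1; have := hB x; simp at *; linarith
  rw [h, abs_mul]
  calc _ ≤ (B + 1) * (2 * |a - b|) := by
        gcongr
        · linarith [abs_nonneg (Q x - 1)]
        · exact sin_sq_lip a b
    _ = _ := by ring

lemma prF_lipschitz (Q : ℝ → ℝ) (B : ℝ) (hB : ∀ x, |Q x| ≤ B) (x : ℝ) :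
    LipschitzWith (Real.toNNReal (2 * (B + 1))) (prF Q x) := by
  have hB0 : 0 ≤ B := (abs_nonneg _).trans (hB 0)
  apply LipschitzWith.of_dist_le_mul
  intro a b
  rw [Real.coe_toNNReal _ (by linarith), Real.dist_eq, Real.dist_eq]
  exact prF_lip Q B hB x a b

lemma prF_exists (Q : ℝ → ℝ) (hQ : Continuous Q) (B : ℝ) (hB : ∀ x, |Q x| ≤ B) :
    ∃ θ : ℝ → ℝ, θ 0 = π / 2 ∧ ∀ t, HasDerivAt θ (prF Q t (θ t)) t := by
  have hB0 : 0 ≤ B := (abs_nonneg _).trans (hB 0)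
  apply aux_global_ode (prF Q) (Real.toNNReal (2 * (B + 1))) (Real.toNNReal (B + 1))
    (prF_lipschitz Q B hB)
  · intro x; unfold prF; fun_prop
  · intro t x
    rw [Real.coe_toNNReal _ (by linarith), Real.norm_eq_abs]
    have h1 := hB t
    rw [abs_le] at h1 ⊢
    have h2 := sin_sq_add_cos_sq x
    have h3 := sq_nonneg (sin x)
    have h4 := sq_nonneg (cos x)
    unfold prF
    constructor <;> nlinarith

/-- comparison principle -/
lemma prF_compare (Q : ℝ → ℝ) (B : ℝ) (hB : ∀ x, |Q x| ≤ B) (f f' g g' : ℝ → ℝ) (a b : ℝ)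
    (hf : ∀ x ∈ Icc a b, HasDerivAt f (f' x) x) (hg : ∀ x ∈ Icc a b, HasDerivAt g (g' x) x)
    (hf' : ∀ x ∈ Icc a b, f' x ≤ prF Q x (f x)) (hg' : ∀ x ∈ Icc a b, prF Q x (g x) ≤ g' x)
    (hab : f a ≤ g a) : ∀ x ∈ Icc a b, f x ≤ g x := by
  intro x hx
  have hB0 : 0 ≤ B := (abs_nonneg _).trans (hB 0)
  set K := 2 * (B + 1) with hK
  have key : ∀ ε > 0, f x ≤ g x + ε * exp ((K + 1) * (x - a)) := by
    intro ε hε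
    have hd : ∀ y ∈ Icc a b, HasDerivAt (fun y => g y + ε * exp ((K + 1) * (y - a)))
        (g' y + ε * (exp ((K + 1) * (y - a)) * (K + 1))) y := by
      intro y hy
      have h1 : HasDerivAt (fun y => (K + 1) * (y - a)) (K + 1) y := by
        simpa using ((hasDerivAt_id y).sub_const a).const_mul (K + 1)
      exact (hg y hy).add (h1.exp.const_mul ε)
    refine image_le_of_deriv_right_lt_deriv_boundary' (f := f) (f' := f')
      (B := fun y => g y + ε * exp ((K + 1) * (y - a)))
      (fun y hy => (hf y hy).continuousAt.continuousWithinAt)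
      (fun y hy => (hf y (Ico_subset_Icc_self hy)).hasDerivWithinAt)
      (by simp; linarith)
      (fun y hy => (hd y hy).continuousAt.continuousWithinAt)
      (fun y hy => (hd y (Ico_subset_Icc_self hy)).hasDerivWithinAt) ?_ hx
    intro y hy hfy
    have hy' := Ico_subset_Icc_self hy
    have h1 := hf' y hy'
    have h2 := hg' y hy'
    have h3 := prF_lip Q B hB y (f y) (g y)
    have hpos : 0 < ε * exp ((K + 1) * (y - a)) := by positivity
    have h4 : f y - g y = ε * exp ((K + 1) * (y - a)) := by
      have : f y = g y + ε * exp ((K + 1) * (y - a)) := hfy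
      linarith
    rw [h4, abs_of_pos hpos, abs_le] at h3
    have h5 := h3.2
    nlinarith
  refine le_of_forall_pos_le_add ?_
  intro ε hε
  have := key (ε / exp ((K + 1) * (x - a))) (by positivity)
  rwa [div_mul_cancel₀ _ (exp_pos _).ne'] at this


lemma prufer_linear (Q θ : ℝ → ℝ) (hQ : ContDiff ℝ (⊤ : ℕ∞) Q)
    (h0 : θ 0 = π / 2) (hθ : ∀ t, HasDerivAt θ (prF Q t (θ t)) t) :
    ∃ u : ℝ → ℝ, ContDiff ℝ (⊤ : ℕ∞) u ∧ (∀ x, deriv (deriv u) x = - Q x * u x) ∧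
      (∀ x, sin (θ x) = 0 → u x = 0) ∧ u 0 ≠ 0 := by
  have hθc : Continuous θ := continuous_iff_continuousAt.2 fun t => (hθ t).continuousAt
  have hQc : Continuous Q := hQ.continuous
  set g : ℝ → ℝ := fun x => sin (θ x) * cos (θ x) * (1 - Q x) with hg
  have hgc : Continuous g := by rw [hg]; fun_prop
  set G : ℝ → ℝ := fun x => ∫ t in (0 : ℝ)..x, g t with hG
  have hGd : ∀ x, HasDerivAt G (g x) x := fun x =>
    intervalIntegral.integral_hasDerivAt_right (hgc.intervalIntegrable _ _)
      (hgc.stronglyMeasurableAtFilter _ _) hgc.continuousAt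
  have hu : ∀ x, HasDerivAt (fun x => exp (G x) * sin (θ x)) (exp (G x) * cos (θ x)) x := by
    intro x
    refine ((hGd x).exp.mul (hθ x).sin).congr_deriv ?_
    simp only [hg, prF]
    have := sin_sq_add_cos_sq (θ x)
    have h2 : cos (θ x) ^ 2 = 1 - sin (θ x) ^ 2 := by linarith
    rw [h2]; ring
  have hu1 : ∀ x, HasDerivAt (fun x => exp (G x) * cos (θ x)) (- Q x * (exp (G x) * sin (θ x))) x := by
    intro x
    refine ((hGd x).exp.mul (hθ x).cos).congr_deriv ?_
    simp only [hg, prF]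
    have := sin_sq_add_cos_sq (θ x)
    have h2 : cos (θ x) ^ 2 = 1 - sin (θ x) ^ 2 := by linarith
    have h3 : cos (θ x) ^ 3 = cos (θ x) * (1 - sin (θ x) ^ 2) := by rw [← h2]; ring
    ring_nf
    rw [h2]; ring
  have hdu : deriv (fun x => exp (G x) * sin (θ x)) = fun x => exp (G x) * cos (θ x) :=
    funext fun x => (hu x).deriv
  have hdu1 : deriv (fun x => exp (G x) * cos (θ x)) = fun x => - Q x * (exp (G x) * sin (θ x)) :=
    funext fun x => (hu1 x).deriv
  have hn : ∀ n : ℕ, ContDiff ℝ n (fun x => exp (G x) * sin (θ x)) ∧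
      ContDiff ℝ n (fun x => exp (G x) * cos (θ x)) := by
    intro n
    induction n with
    | zero =>
      constructor
      · exact contDiff_zero.2 (continuous_iff_continuousAt.2 fun x => (hu x).continuousAt)
      · exact contDiff_zero.2 (continuous_iff_continuousAt.2 fun x => (hu1 x).continuousAt)
    | succ n ih =>
      constructor
      · push_cast
        rw [contDiff_succ_iff_deriv, hdu]
        exact ⟨fun x => (hu x).differentiableAt, by simp, ih.2⟩
      · push_cast
        rw [contDiff_succ_iff_deriv, hdu1]
        refine ⟨fun x => (hu1 x).differentiableAt, by simp, ?_⟩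
        have hQn : ContDiff ℝ n Q := hQ.of_le (by exact_mod_cast le_top)
        exact hQn.neg.mul ih.1
  refine ⟨fun x => exp (G x) * sin (θ x), ?_, ?_, ?_, ?_⟩
  · exact contDiff_infty.2 fun n => (hn n).1
  · intro x; rw [hdu, hdu1]
  · intro x hx; simp [hx]
  · simp [h0]

lemma prufer_symm (Q θ : ℝ → ℝ) (B : ℝ) (hB : ∀ x, |Q x| ≤ B) (hev : ∀ x, Q (-x) = Q x)
    (h0 : θ 0 = π / 2) (hθ : ∀ t, HasDerivAt θ (prF Q t (θ t)) t) (x : ℝ) :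
    θ (-x) = π - θ x := by
  have h : (fun x => π - θ (-x)) = θ := by
    apply ODE_solution_unique_univ (v := prF Q) (s := fun _ => univ) (t₀ := 0)
      (fun t => (prF_lipschitz Q B hB t).lipschitzOnWith)
    · intro t
      refine ⟨?_, trivial⟩
      have h1 : HasDerivAt (fun x => θ (-x)) (prF Q (-t) (θ (-t)) * (-1)) t :=
        (hθ (-t)).comp t (hasDerivAt_neg t)
      convert h1.const_sub π using 1
      unfold prF
      rw [hev]; simp
    · exact fun t => ⟨hθ t, trivial⟩
    · simp [h0]; ring
  have := congrFun h x
  linarith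

lemma prufer_cont (V : ℝ → ℝ) (BV h : ℝ) (hV : ∀ x, |V x| ≤ BV) (hh : 0 < h) (θ : ℝ → ℝ → ℝ)
    (h0 : ∀ E, θ E 0 = π / 2)
    (hθ : ∀ E t, HasDerivAt (θ E) (prF (fun x => (E - V x) / h ^ 2) t (θ E t)) t) (x : ℝ)
    (hx : 0 ≤ x) : Continuous (fun E => θ E x) := by
  rw [continuous_iff_continuousAt]
  intro E
  have hB : ∀ x, |(E - V x) / h ^ 2| ≤ (|E| + BV) / h ^ 2 := by
    intro x
    rw [abs_div, abs_of_pos (by positivity : 0 < h ^ 2)]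
    gcongr
    have := abs_sub E (V x); linarith [hV x]
  have hc : ∀ E, Continuous (θ E) := fun E =>
    continuous_iff_continuousAt.2 fun t => (hθ E t).continuousAt
  set K := Real.toNNReal (2 * ((|E| + BV) / h ^ 2 + 1))
  have key : ∀ E', dist (θ E' x) (θ E x) ≤ gronwallBound 0 K (|E' - E| / h ^ 2 + 0) (x - 0) := by
    intro E'
    refine dist_le_of_approx_trajectories_ODE (v := prF (fun x => (E - V x) / h ^ 2))
      (f := θ E') (g := θ E)
      (f' := fun t => prF (fun x => (E' - V x) / h ^ 2) t (θ E' t))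
      (g' := fun t => prF (fun x => (E - V x) / h ^ 2) t (θ E t)) (b := x)
      (prF_lipschitz _ _ hB) (hc E').continuousOn
      (fun t _ => (hθ E' t).hasDerivWithinAt) ?_ (hc E).continuousOn
      (fun t _ => (hθ E t).hasDerivWithinAt) ?_ ?_ x ⟨hx, le_rfl⟩
    · intro t _
      rw [Real.dist_eq]
      have : prF (fun x => (E' - V x) / h ^ 2) t (θ E' t) - prF (fun x => (E - V x) / h ^ 2) t (θ E' t)
          = (E' - E) / h ^ 2 * sin (θ E' t) ^ 2 := by
        unfold prF; ring
      rw [this, abs_mul, abs_div, abs_of_pos (by positivity : 0 < h ^ 2)]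
      have h1 : |sin (θ E' t) ^ 2| ≤ 1 := by
        rw [abs_of_nonneg (sq_nonneg _)]; nlinarith [sin_sq_add_cos_sq (θ E' t), sq_nonneg (cos (θ E' t))]
      exact mul_le_of_le_one_right (by positivity) h1
    · intro t _; simp
    · simp [h0]
  rw [ContinuousAt, tendsto_iff_dist_tendsto_zero]
  refine squeeze_zero (fun _ => dist_nonneg) key ?_
  have h1 : Continuous fun E' => gronwallBound 0 K (|E' - E| / h ^ 2 + 0) (x - 0) := by
    have h2 : Continuous fun E' => |E' - E| / h ^ 2 + 0 := by fun_prop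
    exact (gronwallBound_continuous_ε 0 K (x - 0)).comp h2
  have := h1.tendsto E
  simpa [gronwallBound_ε0_δ0] using this

lemma finish_eigen (V : ℝ → ℝ) (hV_smooth : ContDiff ℝ (⊤ : ℕ∞) V) (hV_nonneg : ∀ x, 0 ≤ V x)
    (R E h : ℝ) (hR : 0 < R) (hh : 0 < h) (hE3 : E ≤ 3) (u : ℝ → ℝ) (hu : ContDiff ℝ (⊤ : ℕ∞) u)
    (hode : ∀ x, deriv (deriv u) x = - ((E - V x) / h ^ 2) * u x) (huR : u R = 0) (huR' : u (-R) = 0)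
    (hu0 : u 0 ≠ 0) :
    ∃ v : ℝ → ℝ, ContDiff ℝ (⊤ : ℕ∞) v ∧
        (∀ x ∈ Set.Icc (-R) R, -h ^ 2 * deriv (deriv v) x + (V x - E) * v x = 0) ∧
        v R = 0 ∧ v (-R) = 0 ∧
        l2Norm (Set.Ioo (-R) R) v = 1 ∧
        h1Norm h (Set.Ioo (-R) R) v (deriv v) ≤ 2 := by
  have hlt : -R < R := by linarith
  have hconv : ∀ f : ℝ → ℝ, ∫ x in Ioo (-R) R, f x = ∫ x in (-R)..R, f x := by
    intro f
    rw [intervalIntegral.integral_of_le hlt.le, integral_Ioc_eq_integral_Ioo]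
  have huc := hu.continuous
  set c := ∫ x in (-R)..R, u x ^ 2 with hc
  have hcpos : 0 < c := by
    apply intervalIntegral.integral_pos hlt (by fun_prop) (fun x _ => sq_nonneg _)
    exact ⟨0, ⟨by linarith, hR.le⟩, by positivity⟩
  set k := (sqrt c)⁻¹ with hk
  have hkc : k ^ 2 * c = 1 := by
    rw [hk, inv_pow, sq_sqrt hcpos.le, inv_mul_cancel₀ hcpos.ne']
  have hdu : Differentiable ℝ u := hu.differentiable (by simp)
  have hu' : ContDiff ℝ (⊤ : ℕ∞) (deriv u) := ((contDiff_infty_iff_deriv).1 hu).2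
  have hddu : Differentiable ℝ (deriv u) := hu'.differentiable (by simp)
  have hdv : deriv (fun x => k * u x) = fun x => k * deriv u x :=
    funext fun x => deriv_const_mul _ (hdu x)
  have hddv : deriv (fun x => k * deriv u x) = fun x => k * deriv (deriv u) x :=
    funext fun x => deriv_const_mul _ (hddu x)
  have hl2 : ∫ x in Ioo (-R) R, ‖k * u x‖ ^ 2 = 1 := by
    rw [hconv]
    have : (fun x => ‖k * u x‖ ^ 2) = fun x => k ^ 2 * u x ^ 2 := by
      funext x; rw [Real.norm_eq_abs, sq_abs]; ring
    rw [this, intervalIntegral.integral_const_mul]; exact hkc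
  refine ⟨fun x => k * u x, contDiff_const.mul hu, ?_, by simp [huR], by simp [huR'], ?_, ?_⟩
  · intro x _
    rw [hdv, hddv]
    simp only [hode]
    field_simp
    ring
  · unfold l2Norm
    rw [hl2]; simp
  · unfold h1Norm
    rw [hl2, hdv, hconv]
    have hVc := hV_smooth.continuous
    have hu'c := hu'.continuous
    have e1 : (fun x => ‖h * (k * deriv u x)‖ ^ 2) = fun x => (k ^ 2) * (h ^ 2 * (deriv u x) ^ 2) := by
      funext x; rw [Real.norm_eq_abs, sq_abs]; ring
    rw [e1, intervalIntegral.integral_const_mul]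
    have ibp : ∫ x in (-R)..R, (deriv u x * deriv u x + u x * deriv (deriv u) x) = 0 := by
      rw [intervalIntegral.integral_eq_sub_of_hasDerivAt (f := fun x => u x * deriv u x)]
      · simp [huR, huR']
      · intro x _
        exact (hdu x).hasDerivAt.mul (hddu x).hasDerivAt
      · apply Continuous.intervalIntegrable
        have : Continuous (deriv (deriv u)) := by
          have : deriv (deriv u) = fun x => - ((E - V x) / h ^ 2) * u x := funext hode
          rw [this]; fun_prop
        fun_prop
    have e2 : ∫ x in (-R)..R, h ^ 2 * (deriv u x) ^ 2 = ∫ x in (-R)..R, (E - V x) * u x ^ 2 := by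
      have h3 : ∫ x in (-R)..R, (h ^ 2 * (deriv u x) ^ 2 - (E - V x) * u x ^ 2) = 0 := by
        have : (fun x => h ^ 2 * (deriv u x) ^ 2 - (E - V x) * u x ^ 2) =
            fun x => h ^ 2 * (deriv u x * deriv u x + u x * deriv (deriv u) x) := by
          funext x; rw [hode]; field_simp; ring
        rw [this, intervalIntegral.integral_const_mul, ibp, mul_zero]
      rw [intervalIntegral.integral_sub] at h3
      · linarith
      · apply Continuous.intervalIntegrable; fun_prop
      · apply Continuous.intervalIntegrable; fun_prop
    have e3 : ∫ x in (-R)..R, (E - V x) * u x ^ 2 ≤ ∫ x in (-R)..R, 3 * u x ^ 2 := by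
      apply intervalIntegral.integral_mono_on hlt.le
      · apply Continuous.intervalIntegrable; fun_prop
      · apply Continuous.intervalIntegrable; fun_prop
      · intro x _
        have := hV_nonneg x
        apply mul_le_mul_of_nonneg_right _ (sq_nonneg _)
        linarith
    rw [intervalIntegral.integral_const_mul] at e3
    rw [e2]
    have e4 : k ^ 2 * (∫ x in (-R)..R, (E - V x) * u x ^ 2) ≤ 3 := by
      calc _ ≤ k ^ 2 * (3 * c) := by gcongr
        _ = 3 := by linear_combination 3 * hkc
    calc _ ≤ sqrt (2 ^ 2) := by apply sqrt_le_sqrt; linarith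
      _ = 2 := by rw [sqrt_sq]; norm_num


lemma prF_cot (Q : ℝ → ℝ) (x m : ℝ) :
    prF Q x (π / 2 - arctan m) = (m ^ 2 + Q x) / (1 + m ^ 2) := by
  unfold prF
  rw [cos_pi_div_two_sub, sin_pi_div_two_sub, sin_sq, cos_sq_arctan]
  have : (0 : ℝ) < 1 + m ^ 2 := by positivity
  field_simp
  ring

lemma prF_tan (Q : ℝ → ℝ) (x t : ℝ) :
    prF Q x (π + arctan t) = (1 + Q x * t ^ 2) / (1 + t ^ 2) := by
  unfold prF
  rw [add_comm π, cos_add_pi, sin_add_pi, neg_sq, neg_sq, sin_sq, cos_sq_arctan]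
  have : (0 : ℝ) < 1 + t ^ 2 := by positivity
  field_simp
  ring

section
variable (Q : ℝ → ℝ) (B : ℝ) (hB : ∀ x, |Q x| ≤ B) (θ : ℝ → ℝ)
  (hθ : ∀ t, HasDerivAt θ (prF Q t (θ t)) t) (m m' : ℝ → ℝ) (a b : ℝ)

lemma hasDerivAt_cot_form (x : ℝ) (hm : HasDerivAt m (m' x) x) :
    HasDerivAt (fun x => π / 2 - arctan (m x)) (- m' x / (1 + m x ^ 2)) x := by
  refine (hm.arctan.const_sub (π / 2)).congr_deriv ?_
  ring

lemma super_cot (hB : ∀ x, |Q x| ≤ B) (hθ : ∀ t, HasDerivAt θ (prF Q t (θ t)) t)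
    (hm : ∀ x ∈ Icc a b, HasDerivAt m (m' x) x)
    (hineq : ∀ x ∈ Icc a b, m x ^ 2 + Q x ≤ - m' x) (ha : θ a ≤ π / 2 - arctan (m a)) :
    ∀ x ∈ Icc a b, θ x ≤ π / 2 - arctan (m x) := by
  refine prF_compare Q B hB θ _ (fun x => π / 2 - arctan (m x)) _ a b (fun x _ => hθ x)
    (fun x hx => hasDerivAt_cot_form m m' x (hm x hx)) (fun x _ => le_rfl) ?_ ha
  intro x hx
  rw [prF_cot]
  gcongr
  exact hineq x hx

lemma sub_cot (hB : ∀ x, |Q x| ≤ B) (hθ : ∀ t, HasDerivAt θ (prF Q t (θ t)) t)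
    (hm : ∀ x ∈ Icc a b, HasDerivAt m (m' x) x)
    (hineq : ∀ x ∈ Icc a b, - m' x ≤ m x ^ 2 + Q x) (ha : π / 2 - arctan (m a) ≤ θ a) :
    ∀ x ∈ Icc a b, π / 2 - arctan (m x) ≤ θ x := by
  refine prF_compare Q B hB (fun x => π / 2 - arctan (m x)) _ θ _ a b
    (fun x hx => hasDerivAt_cot_form m m' x (hm x hx)) (fun x _ => hθ x) ?_ (fun x _ => le_rfl) ha
  intro x hx
  rw [prF_cot]
  gcongr
  exact hineq x hx

lemma sub_tan (hB : ∀ x, |Q x| ≤ B) (hθ : ∀ t, HasDerivAt θ (prF Q t (θ t)) t)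
    (hm : ∀ x ∈ Icc a b, HasDerivAt m (m' x) x)
    (hineq : ∀ x ∈ Icc a b, m' x ≤ 1 + Q x * m x ^ 2) (ha : π + arctan (m a) ≤ θ a) :
    ∀ x ∈ Icc a b, π + arctan (m x) ≤ θ x := by
  refine prF_compare Q B hB (fun x => π + arctan (m x)) (fun x => m' x / (1 + m x ^ 2)) θ _ a b
    (fun x hx => ?_) (fun x _ => hθ x) ?_ (fun x _ => le_rfl) ha
  · refine ((hm x hx).arctan.const_add π).congr_deriv ?_
    ring
  · intro x hx
    rw [prF_tan]
    gcongr
    exact hineq x hx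

end

/-- cotangent -/
def ct (t : ℝ) : ℝ := cos t / sin t

lemma ct_anti (s a : ℝ) (hs : 0 < s) (hsa : s ≤ a) (ha : a < π) : ct a ≤ ct s := by
  unfold ct
  have h1 : 0 < sin s := sin_pos_of_pos_of_lt_pi hs (by linarith)
  have h2 : 0 < sin a := sin_pos_of_pos_of_lt_pi (by linarith) ha
  have h3 : 0 ≤ sin (a - s) := sin_nonneg_of_nonneg_of_le_pi (by linarith) (by linarith)
  rw [sin_sub] at h3
  rw [div_le_div_iff₀ h2 h1]
  linarith

lemma ct_cot (m : ℝ) : ct (π / 2 - arctan m) = m := by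
  unfold ct
  rw [cos_pi_div_two_sub, sin_pi_div_two_sub, ← tan_eq_sin_div_cos, tan_arctan]

lemma ct_tan (t : ℝ) : ct (arctan t) = t⁻¹ := by
  unfold ct
  rw [← tan_arctan t, arctan_tan (neg_pi_div_two_lt_arctan t) (arctan_lt_pi_div_two t),
    tan_eq_sin_div_cos, inv_div]

lemma ct_sub_pi (t : ℝ) : ct (t - π) = ct t := by
  unfold ct
  rw [cos_sub_pi, sin_sub_pi, neg_div_neg_eq]

lemma hasDerivAt_ct (Q θ : ℝ → ℝ) (x : ℝ) (hθ : HasDerivAt θ (prF Q x (θ x)) x)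
    (hs : sin (θ x) ≠ 0) : HasDerivAt (fun x => ct (θ x)) (-(ct (θ x) ^ 2 + Q x)) x := by
  unfold ct
  refine (hθ.cos.div hθ.sin hs).congr_deriv ?_
  unfold prF
  field_simp
  have h2 : cos (θ x) ^ 2 = 1 - sin (θ x) ^ 2 := by linarith [sin_sq_add_cos_sq (θ x)]
  rw [h2]; ring

/-- the growth function in the well -/
lemma growth_fn (h : ℝ) (hh : 0 < h) (x : ℝ) (hx : x ∈ Icc (0 : ℝ) (2 / 3)) :
    ∃ n' : ℝ, HasDerivAt (fun x : ℝ => x / h * exp ((x ^ 2 - 4 / 9) / (4 * h))) n' x ∧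
      n' ≤ h * exp (-(1 / (9 * h))) / h ^ 2 + x / h * (x / h * exp ((x ^ 2 - 4 / 9) / (4 * h))) ∧
      0 ≤ x / h * exp ((x ^ 2 - 4 / 9) / (4 * h)) ∧
      x / h * exp ((x ^ 2 - 4 / 9) / (4 * h)) ≤ x / h := by
  obtain ⟨hx0, hx1⟩ := hx
  have hd : HasDerivAt (fun x : ℝ => x / h * exp ((x ^ 2 - 4 / 9) / (4 * h)))
      (exp ((x ^ 2 - 4 / 9) / (4 * h)) / h * (1 + x ^ 2 / (2 * h))) x := by
    have h1 : HasDerivAt (fun x : ℝ => (x ^ 2 - 4 / 9) / (4 * h)) (2 * x / (4 * h)) x := by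
      simpa using (((hasDerivAt_pow 2 x).sub_const (4 / 9)).div_const (4 * h))
    have h2 : HasDerivAt (fun x : ℝ => x / h) (1 / h) x := (hasDerivAt_id x).div_const h
    refine (h2.mul h1.exp).congr_deriv ?_
    field_simp
    ring
  refine ⟨_, hd, ?_, by positivity, ?_⟩
  · have hy : exp ((x ^ 2 - 4 / 9) / (4 * h)) = exp (-(1 / (9 * h))) * exp (x ^ 2 / (4 * h)) := by
      rw [← exp_add]; congr 1; field_simp; ring
    rw [hy]
    set y := x ^ 2 / (4 * h) with hyd
    have hy0 : 0 ≤ y := by positivity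
    have hx2 : x ^ 2 = 4 * h * y := by rw [hyd]; field_simp
    have h1 : exp y * (1 - 2 * y) ≤ 1 := by
      have := add_one_le_exp (-y)
      have h3 : exp y * exp (-y) = 1 := by rw [← exp_add]; simp
      nlinarith [exp_pos y]
    have h0 : 0 < exp (-(1 / (9 * h))) := exp_pos _
    set e0 := exp (-(1 / (9 * h)))
    have e1 : h * e0 / h ^ 2 + x / h * (x / h * (e0 * exp y)) = (e0 + 4 * y * (e0 * exp y)) / h := by
      have : x / h * (x / h * (e0 * exp y)) = x ^ 2 * (e0 * exp y) / h ^ 2 := by ring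
      rw [this, hx2]; field_simp
    have e2 : e0 * exp y / h * (1 + x ^ 2 / (2 * h)) = e0 * exp y * (1 + 2 * y) / h := by
      rw [hx2]; field_simp; ring
    rw [e1, e2]
    gcongr
    nlinarith
  · have : exp ((x ^ 2 - 4 / 9) / (4 * h)) ≤ 1 := by
      rw [exp_le_one_iff]
      apply div_nonpos_of_nonpos_of_nonneg _ (by positivity)
      nlinarith
    exact mul_le_of_le_one_right (by positivity) this


lemma minus_bound (Q : ℝ → ℝ) (B : ℝ) (hB : ∀ x, |Q x| ≤ B) (θ : ℝ → ℝ) (h0 : θ 0 = π / 2)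
    (hθ : ∀ t, HasDerivAt θ (prF Q t (θ t)) t) (h : ℝ) (hh : 0 < h) (hh1 : h < 1 / 1000)
    (hQ : ∀ x ∈ Icc (0 : ℝ) 1, Q x = (h - h * exp (-(1 / (9 * h))) - x ^ 2) / h ^ 2) :
    ∀ x ∈ Icc (17 / 20 : ℝ) 1, θ x ≤ π / 2 - arctan (7 / 10 / h) := by
  have he0 : 0 < exp (-(1 / (9 * h))) := exp_pos _
  have s1 : θ (2 / 3) ≤ π / 2 := by
    set n : ℝ → ℝ := fun x => x / h * exp ((x ^ 2 - 4 / 9) / (4 * h)) with hn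
    have := super_cot Q B θ (fun x => -(x / h) + n x) (fun x => -(1 / h) + deriv n x) 0 (2 / 3) hB hθ
      ?_ ?_ ?_ (2 / 3) (by norm_num)
    · have e : -(2 / 3 / h) + n (2 / 3) = 0 := by
        simp only [hn]; norm_num
      simpa [e] using this
    · intro x hx
      obtain ⟨n', hd, -⟩ := growth_fn h hh x hx
      rw [hd.deriv]
      exact ((hasDerivAt_id x).div_const h).neg.add hd
    · intro x hx
      obtain ⟨n', hd, h1, h2, h3⟩ := growth_fn h hh x hx
      rw [hd.deriv, hQ x ⟨hx.1, by linarith [hx.2]⟩]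
      change _ ≤ _ at h1
      change 0 ≤ n x at h2
      change n x ≤ x / h at h3
      change n' ≤ _ + x / h * n x at h1
      have e : (h - h * exp (-(1 / (9 * h))) - x ^ 2) / h ^ 2 =
        1 / h - h * exp (-(1 / (9 * h))) / h ^ 2 - (x / h) ^ 2 := by field_simp
      rw [e]
      nlinarith
    · simp [hn, h0]
  have s2 : θ (4 / 5) ≤ π / 2 := by
    have := super_cot Q B θ (fun x => 0) (fun x => 0) (2 / 3) (4 / 5) hB hθ
      (fun x _ => hasDerivAt_const x _) ?_ (by simpa using s1) (4 / 5) (by norm_num)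
    · simpa using this
    · intro x hx
      have hx1 := hx.1
      have hx2 := hx.2
      rw [hQ x ⟨by linarith, by linarith⟩]
      simp only [ne_eq, OfNat.ofNat_ne_zero, not_false_eq_true, zero_pow, zero_add, neg_zero]
      apply div_nonpos_of_nonpos_of_nonneg _ (by positivity)
      nlinarith
  have hineq : ∀ x ∈ Icc (4 / 5 : ℝ) 1, (49 / 100 + 14 * h) / h ^ 2 ≤ - Q x := by
    intro x hx
    have hx1 := hx.1
    have hx2 := hx.2
    rw [hQ x ⟨by linarith, by linarith⟩, ← neg_div]
    gcongr
    nlinarith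
  have s3 : θ (17 / 20) ≤ π / 2 - arctan (7 / 10 / h) := by
    have := super_cot Q B θ (fun x => 14 / h * (x - 4 / 5)) (fun x => 14 / h) (4 / 5) (17 / 20) hB hθ
      (fun x _ => by simpa using ((hasDerivAt_id x).sub_const (4 / 5)).const_mul (14 / h)) ?_
      (by simpa using s2) (17 / 20) (by norm_num)
    · convert this using 3
      field_simp; norm_num
    · intro x hx
      have hx1 := hx.1
      have hx2 := hx.2
      have h1 := hineq x ⟨by linarith, by linarith⟩
      have h2 : (14 / h * (x - 4 / 5)) ^ 2 ≤ (14 / h * (1 / 20)) ^ 2 := by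
        have hx3 : 0 ≤ x - 4 / 5 := by linarith
        exact pow_le_pow_left₀ (by positivity)
          (mul_le_mul_of_nonneg_left (by linarith) (by positivity)) 2
      have e : (49 / 100 + 14 * h) / h ^ 2 = (14 / h * (1 / 20)) ^ 2 + 14 / h := by
        field_simp; ring
      linarith
  intro x hx
  refine super_cot Q B θ (fun x => 7 / 10 / h) (fun x => 0) (17 / 20) 1 hB hθ
      (fun x _ => hasDerivAt_const x _) ?_ s3 x hx
  intro x hx
  have h1 := hineq x ⟨by linarith [hx.1], hx.2⟩
  have e : (49 / 100 + 14 * h) / h ^ 2 = (7 / 10 / h) ^ 2 + 14 / h := by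
    field_simp; ring
  have : 0 < 14 / h := by positivity
  simp only [neg_zero]
  linarith

lemma plus_bound (Q : ℝ → ℝ) (B : ℝ) (hB : ∀ x, |Q x| ≤ B) (θ : ℝ → ℝ) (h0 : θ 0 = π / 2)
    (hθ : ∀ t, HasDerivAt θ (prF Q t (θ t)) t) (h : ℝ) (hh : 0 < h) (hh1 : h < 1 / 1000)
    (hQ : ∀ x ∈ Icc (0 : ℝ) 1, Q x = (h + h * exp (-(1 / (9 * h))) - x ^ 2) / h ^ 2) :
    ∀ x ∈ Icc (17 / 20 : ℝ) 1, π + arctan (9 / 32 * h) ≤ θ x := by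
  have he0 : 0 < exp (-(1 / (9 * h))) := exp_pos _
  have s1 : π + arctan (-(3 / 4 * h)) ≤ θ (2 / 3) := by
    set n : ℝ → ℝ := fun x => x / h * exp ((x ^ 2 - 4 / 9) / (4 * h)) with hn
    have := sub_cot Q B θ (fun x => -(x / h) - n x) (fun x => -(1 / h) - deriv n x) 0 (2 / 3) hB hθ
      ?_ ?_ ?_ (2 / 3) (by norm_num)
    · have e : -(2 / 3 / h) - n (2 / 3) = - (3 / 4 * h)⁻¹ := by
        simp only [hn]; norm_num; field_simp; norm_num
      simp only [e] at this
      rw [arctan_neg, arctan_inv_of_pos (by positivity)] at this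
      rw [arctan_neg]
      linarith
    · intro x hx
      obtain ⟨n', hd, -⟩ := growth_fn h hh x hx
      rw [hd.deriv]
      exact ((hasDerivAt_id x).div_const h).neg.sub hd
    · intro x hx
      obtain ⟨n', hd, h1, h2, h3⟩ := growth_fn h hh x hx
      rw [hd.deriv, hQ x ⟨hx.1, by linarith [hx.2]⟩]
      change 0 ≤ n x at h2
      change n x ≤ x / h at h3
      change n' ≤ _ + x / h * n x at h1
      have e : (h + h * exp (-(1 / (9 * h))) - x ^ 2) / h ^ 2 =
        1 / h + h * exp (-(1 / (9 * h))) / h ^ 2 - (x / h) ^ 2 := by field_simp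
      rw [e]
      have : 0 ≤ x / h * n x := mul_nonneg (div_nonneg hx.1 hh.le) h2
      nlinarith
    · simp [hn, h0]
  have hineq : ∀ x ∈ Icc (0 : ℝ) 1, ∀ t : ℝ, |t| ≤ 3 / 4 * h → 7 / 16 ≤ 1 + Q x * t ^ 2 := by
    intro x hx t ht
    have h1 : -(1 / h ^ 2) ≤ Q x := by
      rw [hQ x hx, ← neg_div]
      gcongr
      have : 0 < h * exp (-(1 / (9 * h))) := by positivity
      nlinarith [hx.1, hx.2]
    have h2 : t ^ 2 ≤ (3 / 4 * h) ^ 2 := sq_le_sq' (by linarith [(abs_le.1 ht).1]) (abs_le.1 ht).2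
    have h3 : -(1 / h ^ 2) * (3 / 4 * h) ^ 2 = - (9 / 16) := by field_simp; norm_num
    have h4 : 0 < 1 / h ^ 2 := by positivity
    have h5 : -(1 / h ^ 2) * t ^ 2 ≤ Q x * t ^ 2 := mul_le_mul_of_nonneg_right h1 (sq_nonneg t)
    nlinarith
  have s2 : π + arctan (9 / 32 * h) ≤ θ (17 / 20) := by
    have := sub_tan Q B θ (fun x => 45 / 8 * h * (x - 4 / 5)) (fun x => 45 / 8 * h) (2 / 3) (17 / 20)
      hB hθ (fun x _ => by simpa using ((hasDerivAt_id x).sub_const (4 / 5)).const_mul (45 / 8 * h)) ?_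
      (by convert s1 using 3; ring) (17 / 20) (by norm_num)
    · convert this using 3
      ring
    · intro x hx
      have hx1 := hx.1
      have hx2 := hx.2
      have h1 := hineq x ⟨by linarith, by linarith⟩ (45 / 8 * h * (x - 4 / 5)) (by
        rw [abs_le]; constructor <;> nlinarith)
      linarith
  intro x hx
  refine sub_tan Q B θ (fun x => 9 / 32 * h) (fun x => 0) (17 / 20) 1 hB hθ
      (fun x _ => hasDerivAt_const x _) ?_ s2 x hx
  intro x hx
  have h1 := hineq x ⟨by linarith [hx.1], by linarith [hx.2]⟩ (9 / 32 * h) (by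
        rw [abs_le]; constructor <;> nlinarith)
  linarith

lemma core_gap (Qm Qp : ℝ → ℝ) (Bm Bp : ℝ) (hBm : ∀ x, |Qm x| ≤ Bm) (hBp : ∀ x, |Qp x| ≤ Bp)
    (θm θp : ℝ → ℝ) (hm0 : θm 0 = π / 2) (hp0 : θp 0 = π / 2)
    (hm : ∀ t, HasDerivAt θm (prF Qm t (θm t)) t) (hp : ∀ t, HasDerivAt θp (prF Qp t (θp t)) t)
    (hle : ∀ x, Qm x ≤ Qp x) (h : ℝ) (hh : 0 < h) (hh1 : h < 1 / 1000)
    (hQm : ∀ x ∈ Icc (0 : ℝ) 1, Qm x = (h - h * exp (-(1 / (9 * h))) - x ^ 2) / h ^ 2)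
    (hQp : ∀ x ∈ Icc (0 : ℝ) 1, Qp x = (h + h * exp (-(1 / (9 * h))) - x ^ 2) / h ^ 2)
    (R : ℝ) (hR : 1 ≤ R) : θm R + π ≤ θp R := by
  by_contra hcon
  rw [not_le] at hcon
  have hlt : ∀ x ∈ Icc (17 / 20 : ℝ) 1, θp x < θm x + π := by
    intro x hx
    by_contra hx'
    rw [not_lt] at hx'
    have := prF_compare Qp Bp hBp (fun x => θm x + π) _ θp _ x R
      (fun x _ => (hm x).add_const π) (fun x _ => hp x) ?_ (fun x _ => le_rfl) hx' R
      ⟨by linarith [hx.2], le_rfl⟩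
    · linarith
    · intro y _
      unfold prF
      rw [cos_add_pi, sin_add_pi, neg_sq, neg_sq]
      have := mul_le_mul_of_nonneg_right (hle y) (sq_nonneg (sin (θm y)))
      linarith
  have bm := minus_bound Qm Bm hBm θm hm0 hm h hh hh1 hQm
  have bp := plus_bound Qp Bp hBp θp hp0 hp h hh hh1 hQp
  have hat : 0 < arctan (9 / 32 * h) := arctan_pos.2 (by positivity)
  have hk : 0 < arctan (7 / 10 / h) := arctan_pos.2 (by positivity)
  have hpi := pi_pos
  -- range facts
  have sm : ∀ x ∈ Icc (17 / 20 : ℝ) 1, sin (θm x) ≠ 0 := by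
    intro x hx
    have h1 := hlt x hx
    have h2 := bm x hx
    have h3 := bp x hx
    exact (sin_pos_of_pos_of_lt_pi (by linarith) (by linarith)).ne'
  have sp : ∀ x ∈ Icc (17 / 20 : ℝ) 1, sin (θp x) ≠ 0 := by
    intro x hx
    have h1 := hlt x hx
    have h2 := bm x hx
    have h3 := bp x hx
    have := sin_pos_of_pos_of_lt_pi (x := θp x - π) (by linarith) (by linarith)
    rw [sin_sub_pi] at this
    linarith
  have cm : ∀ x ∈ Icc (17 / 20 : ℝ) 1, 7 / 10 / h ≤ ct (θm x) := by
    intro x hx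
    have h1 := hlt x hx
    have h2 := bm x hx
    have h3 := bp x hx
    have := ct_anti (θm x) _ (by linarith) h2 (by linarith)
    rwa [ct_cot] at this
  have cmp : ∀ x ∈ Icc (17 / 20 : ℝ) 1, ct (θm x) ≤ ct (θp x) := by
    intro x hx
    have h1 := hlt x hx
    have h2 := bm x hx
    have h3 := bp x hx
    have := ct_anti (θp x - π) (θm x) (by linarith) (by linarith) (by linarith)
    rwa [ct_sub_pi] at this
  have cp : ct (θp (17 / 20)) ≤ 32 / 9 / h := by
    have hx : (17 / 20 : ℝ) ∈ Icc (17 / 20 : ℝ) 1 := by norm_num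
    have h1 := hlt _ hx
    have h2 := bm _ hx
    have h3 := bp _ hx
    have := ct_anti _ (θp (17 / 20) - π) hat (by linarith) (by linarith)
    rw [ct_sub_pi, ct_tan] at this
    refine this.trans (le_of_eq ?_)
    field_simp
  set δ := h * exp (-(1 / (9 * h))) with hδ
  have hδ0 : 0 < δ := by positivity
  set κ := 7 / 10 / h with hκ
  have hκ0 : 0 < κ := by positivity
  set G : ℝ → ℝ := fun x => (ct (θp x) - ct (θm x) + δ / (h ^ 2 * κ)) * exp (2 * κ * (x - 17 / 20))
    with hG
  set M' : ℝ → ℝ := fun x => -(ct (θp x) ^ 2 + Qp x) - -(ct (θm x) ^ 2 + Qm x) with hM'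
  have hGd : ∀ x ∈ Icc (17 / 20 : ℝ) 1, HasDerivAt G (M' x * exp (2 * κ * (x - 17 / 20)) +
      (ct (θp x) - ct (θm x) + δ / (h ^ 2 * κ)) * (exp (2 * κ * (x - 17 / 20)) * (2 * κ))) x := by
    intro x hx
    have h1 := hasDerivAt_ct Qp θp x (hp x) (sp x hx)
    have h2 := hasDerivAt_ct Qm θm x (hm x) (sm x hx)
    have h3 : HasDerivAt (fun x : ℝ => 2 * κ * (x - 17 / 20)) (2 * κ) x := by
      simpa using ((hasDerivAt_id x).sub_const (17 / 20)).const_mul (2 * κ)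
    exact ((h1.sub h2).add_const _).mul h3.exp
  have hGle : G 1 ≤ G (17 / 20) := by
    refine image_le_of_deriv_right_le_deriv_boundary (f := G) (B := fun _ => G (17 / 20))
      (B' := fun _ => 0) (a := 17 / 20) (b := 1)
      (fun x hx => (hGd x hx).continuousAt.continuousWithinAt)
      (fun x hx => (hGd x (Ico_subset_Icc_self hx)).hasDerivWithinAt) le_rfl continuousOn_const
      (fun x _ => (hasDerivAt_const x _).hasDerivWithinAt) ?_ (by norm_num)
    intro x hx
    have hx' := Ico_subset_Icc_self hx
    have c1 := cm x hx'
    have c2 := cmp x hx'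
    have hq : Qp x - Qm x = 2 * δ / h ^ 2 := by
      have hx01 : x ∈ Icc (0 : ℝ) 1 := ⟨by linarith [hx.1], hx.2.le⟩
      rw [hQm x hx01, hQp x hx01]; ring
    have e : M' x * exp (2 * κ * (x - 17 / 20)) +
      (ct (θp x) - ct (θm x) + δ / (h ^ 2 * κ)) * (exp (2 * κ * (x - 17 / 20)) * (2 * κ)) =
      - (exp (2 * κ * (x - 17 / 20)) *
        ((ct (θp x) - ct (θm x)) * (ct (θp x) + ct (θm x) - 2 * κ))) := by
      have e1 : δ / (h ^ 2 * κ) * (2 * κ) = 2 * δ / h ^ 2 := by field_simp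
      have e2 : M' x = -(ct (θp x) - ct (θm x)) * (ct (θp x) + ct (θm x)) - δ / (h ^ 2 * κ) * (2 * κ) := by
        rw [e1, ← hq, hM']; ring
      rw [e2]; ring
    rw [e]
    apply neg_nonpos_of_nonneg
    apply mul_nonneg (exp_pos _).le
    apply mul_nonneg <;> linarith
  have hfin : δ / (h ^ 2 * κ) * exp (2 * κ * (1 - 17 / 20)) ≤ 32 / 9 / h + δ / (h ^ 2 * κ) := by
    have h1 : δ / (h ^ 2 * κ) * exp (2 * κ * (1 - 17 / 20)) ≤ G 1 := by
      simp only [hG]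
      gcongr
      linarith [cmp 1 (by norm_num)]
    have h2 : G (17 / 20) ≤ 32 / 9 / h + δ / (h ^ 2 * κ) := by
      simp only [hG, sub_self, mul_zero, exp_zero, mul_one]
      linarith [cm (17 / 20) (by norm_num)]
    linarith
  have ek : h ^ 2 * κ = 7 / 10 * h := by rw [hκ]; field_simp
  have ex : 2 * κ * (1 - 17 / 20) = 21 / 100 / h := by rw [hκ]; field_simp; norm_num
  rw [ek, ex] at hfin
  have h3 : δ * exp (21 / 100 / h) ≤ 7 / 10 * (32 / 9) + δ := by
    have e1 : δ / (7 / 10 * h) * exp (21 / 100 / h) = (δ * exp (21 / 100 / h)) / (7 / 10 * h) := by ring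
    have e2 : 32 / 9 / h + δ / (7 / 10 * h) = (7 / 10 * (32 / 9) + δ) / (7 / 10 * h) := by
      field_simp
    rw [e1, e2] at hfin
    exact (div_le_div_iff_of_pos_right (by positivity)).1 hfin
  have h4 : δ * exp (21 / 100 / h) = h * exp (89 / 900 / h) := by
    rw [hδ, mul_assoc, ← exp_add]; congr 2; field_simp; norm_num
  have h5 : δ ≤ h := by
    rw [hδ]
    apply mul_le_of_le_one_right hh.le
    rw [exp_le_one_iff]
    have : 0 < 1 / (9 * h) := by positivity
    linarith
  have h6 := quadratic_le_exp_of_nonneg (x := 89 / 900 / h) (by positivity)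
  have h7 : h * (89 / 900 / h) ^ 2 / 2 ≤ h * exp (89 / 900 / h) := by
    have : 0 < 89 / 900 / h := by positivity
    nlinarith
  have h8 : h * (89 / 900 / h) ^ 2 / 2 = (89 / 900) ^ 2 / 2 * (1 / h) := by field_simp
  have h9 : 1000 ≤ 1 / h := by
    rw [le_div_iff₀ hh]; linarith
  rw [h8] at h7
  norm_num at h7 h3
  rw [h4] at h3
  norm_num at h9
  linarith

/-- For small `h` and any `R̃ ∈ [R, R+1]` there is a normalized Dirichlet
eigenfunction `v` of `P(h)` on `[-R̃, R̃]` with eigenvalue `E₀ = 1 + h + O(e^{-1/(10h)})`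
and bounded semiclassical `H¹_h` norm. -/
theorem dirichlet_eigenfunction_near_ground_state
    (V : ℝ → ℝ)
    (hV_smooth : ContDiff ℝ (⊤ : ℕ∞) V) (hV_comp : HasCompactSupport V)
    (hV_nonneg : ∀ x, 0 ≤ V x) (hV_even : ∀ x, V (-x) = V x)
    (hV_inner : ∀ x ∈ Set.Icc (-1 : ℝ) 1, V x = x ^ 2 + 1)
    (hV_slope : ∀ x ∈ Set.Icc (2 : ℝ) 3.5, V x = 4 - x)
    (hV_lt : ∀ x : ℝ, 3 < x → V x < 1)
    (hV_supp : tsupport V ⊆ Set.Icc (-5 : ℝ) 5)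
    (R : ℝ) (hR : 5 < R) :
    ∃ C > (0 : ℝ), ∃ h₀ > (0 : ℝ), ∀ h : ℝ, 0 < h → h < h₀ →
      ∀ R' ∈ Set.Icc R (R + 1),
      ∃ E₀ : ℝ, ∃ v : ℝ → ℝ,
        ContDiff ℝ (⊤ : ℕ∞) v ∧
        (∀ x ∈ Set.Icc (-R') R', -h ^ 2 * deriv (deriv v) x + (V x - E₀) * v x = 0) ∧
        v R' = 0 ∧ v (-R') = 0 ∧
        l2Norm (Set.Ioo (-R') R') v = 1 ∧
        h1Norm h (Set.Ioo (-R') R') v (deriv v) ≤ C ∧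
        |E₀ - (1 + h)| ≤ C * Real.exp (-1 / (10 * h)) := by
  refine ⟨2, by norm_num, 1 / 1000, by norm_num, ?_⟩
  intro h hh hh1 R' hR'
  have hR5 : 5 < R' := lt_of_lt_of_le hR hR'.1
  obtain ⟨BV, hBV⟩ := hV_smooth.continuous.bounded_above_of_compact_support hV_comp
  have hBV' : ∀ x, |V x| ≤ BV := hBV
  have hQs : ∀ E : ℝ, ContDiff ℝ (⊤ : ℕ∞) (fun x => (E - V x) / h ^ 2) := fun E =>
    (contDiff_const.sub hV_smooth).div_const _
  have hQb : ∀ E x : ℝ, |(fun x => (E - V x) / h ^ 2) x| ≤ (|E| + BV) / h ^ 2 := by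
    intro E x
    simp only [abs_div, abs_of_pos (pow_pos hh 2)]
    apply div_le_div_of_nonneg_right _ (by positivity)
    exact (abs_sub _ _).trans (by linarith [hBV' x])
  choose θ h0 hθ using fun E : ℝ =>
    prF_exists (fun x => (E - V x) / h ^ 2) (hQs E).continuous _ (hQb E)
  set δ := h * exp (-(1 / (9 * h))) with hδ
  have hδ0 : 0 < δ := by positivity
  have hgap := core_gap _ _ _ _ (hQb (1 + h - δ)) (hQb (1 + h + δ)) (θ (1 + h - δ))
    (θ (1 + h + δ)) (h0 _) (h0 _) (hθ _) (hθ _)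
    (fun x => div_le_div_of_nonneg_right (by linarith) (by positivity)) h hh hh1
    (fun x hx => by
      simp only [hV_inner x ⟨by linarith [hx.1], hx.2⟩, ← hδ]; congr 1; ring)
    (fun x hx => by
      simp only [hV_inner x ⟨by linarith [hx.1], hx.2⟩, ← hδ]; congr 1; ring)
    R' (by linarith)
  have hcont := prufer_cont V BV h hBV' hh θ h0 hθ R' (by linarith)
  have hπ := Real.pi_pos
  set k : ℤ := ⌈θ (1 + h - δ) R' / π⌉ with hk
  have hk1 : θ (1 + h - δ) R' ≤ k * π := (div_le_iff₀ hπ).1 (Int.le_ceil _)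
  have hk2 : k * π ≤ θ (1 + h + δ) R' := by
    have h1 : (k : ℝ) < θ (1 + h - δ) R' / π + 1 := Int.ceil_lt_add_one _
    have h2 : (k : ℝ) * π ≤ (θ (1 + h - δ) R' / π + 1) * π :=
      mul_le_mul_of_nonneg_right h1.le hπ.le
    rw [add_mul, div_mul_cancel₀ _ hπ.ne', one_mul] at h2
    linarith
  obtain ⟨E, hE, hEk⟩ := intermediate_value_Icc (by linarith : 1 + h - δ ≤ 1 + h + δ)
    hcont.continuousOn ⟨hk1, hk2⟩
  simp only at hEk
  have hexp1 : exp (-(1 / (9 * h))) ≤ exp (-1 / (10 * h)) := by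
    apply exp_le_exp.2
    rw [neg_div]
    apply neg_le_neg
    apply one_div_le_one_div_of_le <;> linarith
  have hexp2 : exp (-(1 / (9 * h))) ≤ 1 := exp_le_one_iff.2 (by
    have : 0 < 1 / (9 * h) := by positivity
    linarith)
  have hδ1 : δ ≤ h := by
    rw [hδ]; exact mul_le_of_le_one_right hh.le hexp2
  have hδ2 : δ ≤ 2 * exp (-1 / (10 * h)) := by
    have := exp_pos (-(1 / (9 * h)))
    rw [hδ]; nlinarith
  obtain ⟨u, hu, hode, hz, hu0⟩ := prufer_linear _ (θ E) (hQs E) (h0 E) (hθ E)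
  have hs1 : sin (θ E R') = 0 := by rw [hEk]; exact sin_int_mul_pi k
  have hs2 : sin (θ E (-R')) = 0 := by
    rw [prufer_symm _ _ _ (hQb E) (fun x => by simp only [hV_even]) (h0 E) (hθ E), sin_pi_sub, hs1]
  obtain ⟨v, hv1, hv2, hv3, hv4, hv5, hv6⟩ := finish_eigen V hV_smooth hV_nonneg R' E h
    (by linarith) hh (by linarith [hE.2]) u hu hode (hz _ hs1) (hz _ hs2) hu0
  refine ⟨E, v, hv1, hv2, hv3, hv4, hv5, hv6, ?_⟩
  rw [abs_le]
  constructor <;> linarith [hE.1, hE.2]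
end
end

section
/- There exist C > 0 and h₀ > 0 such that for every h ∈ (0,h₀), every E₀ ∈ ℝ with |E₀ − (1+h)| ≤ e^{−1/(10h)}, every R̃ ∈ [R, R+1], and every v ∈ C²([3.5, R+1];ℂ) with −h²v'' + (V−E₀)v = 0 on [3.5,R+1], one has ‖v‖_{H¹_h(3.5,R̃)} ≤ C (|W(v,v₊)(3.5)| + |W(v,v₋)(3.5)|). -/
open MeasureTheory Set Real

noncomputable section

/-- The phase `Φ(x) = ∫_{4-E₀}^x √(E₀ - V(y)) dy`. -/
def wkbPhase (V : ℝ → ℝ) (E₀ : ℝ) (x : ℝ) : ℝ :=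
  ∫ y in (4 - E₀)..x, Real.sqrt (E₀ - V y)

/-- The WKB solution `v₊(x) = (E₀ - V(x))^{-1/4} e^{iΦ(x)/h}`. -/
def wkbPlus (V : ℝ → ℝ) (h E₀ : ℝ) (x : ℝ) : ℂ :=
  (((E₀ - V x) ^ (-(1 / 4 : ℝ)) : ℝ) : ℂ) * Complex.exp (Complex.I * (wkbPhase V E₀ x) / h)

/-- The WKB solution `v₋(x) = (E₀ - V(x))^{-1/4} e^{-iΦ(x)/h}`. -/
def wkbMinus (V : ℝ → ℝ) (h E₀ : ℝ) (x : ℝ) : ℂ :=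
  (((E₀ - V x) ^ (-(1 / 4 : ℝ)) : ℝ) : ℂ) * Complex.exp (-Complex.I * (wkbPhase V E₀ x) / h)

/-- The semiclassical Wronskian `W(v, v₊)(x)`. -/
def wrPlus (V : ℝ → ℝ) (h E₀ : ℝ) (v v' : ℝ → ℂ) (x : ℝ) : ℂ :=
  v x * ((h : ℂ) * deriv (wkbPlus V h E₀) x) - wkbPlus V h E₀ x * ((h : ℂ) * v' x)

/-- The semiclassical Wronskian `W(v, v₋)(x)`. -/
def wrMinus (V : ℝ → ℝ) (h E₀ : ℝ) (v v' : ℝ → ℂ) (x : ℝ) : ℂ :=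
  v x * ((h : ℂ) * deriv (wkbMinus V h E₀) x) - wkbMinus V h E₀ x * ((h : ℂ) * v' x)

lemma aux_deriv (V : ℝ → ℝ) (hV : ContDiff ℝ (⊤ : ℕ∞) V) (h E x σ : ℝ) (hq : 0 < E - V x) :
    HasDerivAt (fun x : ℝ => (((E - V x) ^ (-(1 / 4 : ℝ)) : ℝ) : ℂ) *
        Complex.exp ((σ : ℂ) * Complex.I * (wkbPhase V E x) / h))
      ((((E - V x) ^ (-(1 / 4 : ℝ)) : ℝ) : ℂ) *
        (((deriv V x / (4 * (E - V x)) : ℝ) : ℂ) + (σ : ℂ) * Complex.I * (Real.sqrt (E - V x) : ℝ) / h)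
        * Complex.exp ((σ : ℂ) * Complex.I * (wkbPhase V E x) / h)) x := by
  have hVc : Continuous V := hV.continuous
  have hd : HasDerivAt V (deriv V x) x :=
    (hV.differentiable (by simp)).differentiableAt.hasDerivAt
  have h1 : HasDerivAt (fun x => (E - V x) ^ (-(1 / 4 : ℝ)))
      ((-deriv V x) * (-(1 / 4 : ℝ)) * (E - V x) ^ (-(1 / 4 : ℝ) - 1)) x :=
    (hd.const_sub E).rpow_const (Or.inl hq.ne')
  have h2 : HasDerivAt (wkbPhase V E) (Real.sqrt (E - V x)) x := by
    have hc : Continuous (fun y => Real.sqrt (E - V y)) := by fun_prop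
    exact intervalIntegral.integral_hasDerivAt_right (hc.intervalIntegrable _ _)
      hc.stronglyMeasurable.stronglyMeasurableAtFilter hc.continuousAt
  have h3 := h1.ofReal_comp.mul
    (((h2.ofReal_comp.const_mul ((σ : ℂ) * Complex.I)).div_const (h : ℂ)).cexp)
  refine h3.congr_deriv ?_
  rw [Real.rpow_sub_one hq.ne']
  have hq' : ((E - V x : ℝ) : ℂ) ≠ 0 := by exact_mod_cast hq.ne'
  push_cast at hq' ⊢
  field_simp

lemma aux_energy (V : ℝ → ℝ) (hV : ContDiff ℝ (⊤ : ℕ∞) V) (h E a b c M : ℝ) (hc : 0 < c)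
    (hM0 : 0 ≤ M)
    (hq : ∀ x ∈ Icc a b, c ≤ E - V x) (hM : ∀ x ∈ Icc a b, |deriv V x| ≤ M)
    (v v' v'' : ℝ → ℂ)
    (hv : ∀ x ∈ Icc a b, HasDerivAt v (v' x) x)
    (hv' : ∀ x ∈ Icc a b, HasDerivAt v' (v'' x) x)
    (heq : ∀ x ∈ Icc a b, -(h : ℂ) ^ 2 * v'' x + ((V x - E : ℝ) : ℂ) * v x = 0)
    (x : ℝ) (hx : x ∈ Icc a b) :
    ‖(h : ℂ) * v' x‖ ^ 2 + (E - V x) * ‖v x‖ ^ 2 ≤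
      Real.exp (M / c * (b - a)) * (‖(h : ℂ) * v' a‖ ^ 2 + (E - V a) * ‖v a‖ ^ 2) := by
  set F : ℝ → ℝ := fun x => ‖(h : ℂ) * v' x‖ ^ 2 + (E - V x) * ‖v x‖ ^ 2 with hF
  have hab : a ≤ b := hx.1.trans hx.2
  have hFd : ∀ y ∈ Icc a b, HasDerivAt F (-deriv V y * ‖v y‖ ^ 2) y := by
    intro y hy
    have hd : HasDerivAt V (deriv V y) y :=
      (hV.differentiable (by simp)).differentiableAt.hasDerivAt
    have h1 := (((hv' y hy).const_mul (h : ℂ)).norm_sq).add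
      ((hd.const_sub E).mul (hv y hy).norm_sq)
    refine h1.congr_deriv ?_
    have e := heq y hy
    have er := congrArg Complex.re e
    have ei := congrArg Complex.im e
    rw [← Complex.ofReal_pow, ← Complex.ofReal_neg] at er ei
    simp only [Complex.add_re, Complex.add_im, Complex.re_ofReal_mul, Complex.im_ofReal_mul, Complex.zero_re, Complex.zero_im] at er ei
    simp only [Complex.inner, Complex.mul_re, Complex.mul_im, Complex.conj_re, Complex.conj_im,
      Complex.ofReal_re, Complex.ofReal_im]
    linear_combination (-2 * (v' y).re) * er - (2 * (v' y).im) * ei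
  set K := M / c with hK
  have hK0 : 0 ≤ K := by positivity
  have hFn : ∀ y ∈ Icc a b, 0 ≤ F y := fun y hy => by
    have := hq y hy
    have : 0 ≤ E - V y := by linarith
    simp only [hF]; positivity
  have hGd : ∀ y ∈ Icc a b, HasDerivAt (fun x => F x * Real.exp (-K * x))
      ((-deriv V y * ‖v y‖ ^ 2) * Real.exp (-K * y) + F y * (Real.exp (-K * y) * (-K * 1))) y :=
    fun y hy => (hFd y hy).mul (((hasDerivAt_id y).const_mul (-K)).exp)
  have hanti : AntitoneOn (fun x => F x * Real.exp (-K * x)) (Icc a b) := by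
    refine antitoneOn_of_deriv_nonpos (convex_Icc a b)
      (fun y hy => (hGd y hy).continuousAt.continuousWithinAt) ?_ ?_
    · intro y hy
      exact (hGd y (interior_subset hy)).differentiableAt.differentiableWithinAt
    · intro y hy
      have hy := interior_subset hy
      rw [(hGd y hy).deriv]
      have h1 : -deriv V y * ‖v y‖ ^ 2 ≤ M * ‖v y‖ ^ 2 := by
        have := neg_abs_le (deriv V y)
        have := hM y hy
        gcongr; linarith
      have h2 : M * ‖v y‖ ^ 2 ≤ K * F y := by
        have e : M = K * c := by rw [hK]; field_simp
        rw [e, mul_assoc]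
        gcongr
        simp only [hF]
        have := hq y hy
        have : c * ‖v y‖ ^ 2 ≤ (E - V y) * ‖v y‖ ^ 2 := by gcongr
        have := sq_nonneg ‖(h : ℂ) * v' y‖
        linarith
      have := Real.exp_pos (-K * y)
      nlinarith
  have h1 := hanti (left_mem_Icc.2 hab) hx hx.1
  simp only at h1
  change F x ≤ Real.exp (K * (b - a)) * F a
  have h2 : F x ≤ F a * Real.exp (K * (x - a)) := by
    have e : Real.exp (K * (x - a)) = Real.exp (-K * a) * Real.exp (K * x) := by
      rw [← Real.exp_add]; ring_nf
    have e2 : Real.exp (-K * x) * Real.exp (K * x) = 1 := by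
      rw [← Real.exp_add]; simp
    rw [e, ← mul_assoc]
    calc F x = F x * Real.exp (-K * x) * Real.exp (K * x) := by rw [mul_assoc, e2, mul_one]
      _ ≤ _ := by gcongr
  have h3 : Real.exp (K * (x - a)) ≤ Real.exp (K * (b - a)) := by
    have := hx.2
    gcongr
  have := hFn a (left_mem_Icc.2 hab)
  nlinarith

lemma aux_init (V : ℝ → ℝ) (hV : ContDiff ℝ (⊤ : ℕ∞) V) (h E x M : ℝ) (v v' : ℝ → ℂ)
    (hh : 0 < h) (hh1 : h ≤ 1) (hM : |deriv V x| ≤ M)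
    (hq1 : 1 / 4 ≤ E - V x) (hq2 : E - V x ≤ 2) :
    ‖v x‖ ≤ 3 / 2 * (‖wrPlus V h E v v' x‖ + ‖wrMinus V h E v v' x‖) ∧
    ‖(h : ℂ) * v' x‖ ≤ (1 + 2 * M) * (‖wrPlus V h E v v' x‖ + ‖wrMinus V h E v v' x‖) := by
  have hq : 0 < E - V x := by linarith
  have dp := aux_deriv V hV h E x 1 hq
  have dm := aux_deriv V hV h E x (-1) hq
  have fp : (fun x : ℝ => (((E - V x) ^ (-(1 / 4 : ℝ)) : ℝ) : ℂ) *
        Complex.exp (((1 : ℝ) : ℂ) * Complex.I * (wkbPhase V E x) / h)) = wkbPlus V h E := by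
    funext y; simp [wkbPlus]
  rw [fp] at dp
  have ep := dp.deriv
  have fm : (fun x : ℝ => (((E - V x) ^ (-(1 / 4 : ℝ)) : ℝ) : ℂ) *
        Complex.exp (((-1 : ℝ) : ℂ) * Complex.I * (wkbPhase V E x) / h)) = wkbMinus V h E := by
    funext y; simp [wkbMinus]
  rw [fm] at dm
  have em := dm.deriv
  set S := ‖wrPlus V h E v v' x‖ + ‖wrMinus V h E v v' x‖ with hS
  set q := E - V x with hqd
  set a : ℝ := q ^ (-(1 / 4 : ℝ)) with ha
  set s : ℝ := Real.sqrt q with hs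
  set θ : ℝ := wkbPhase V E x / h with hθ
  set d : ℝ := deriv V x / (4 * q) with hd
  have ha0 : 0 < a := Real.rpow_pos_of_pos hq _
  have has : a ^ 2 * s = 1 := by
    rw [ha, hs, Real.sqrt_eq_rpow, ← Real.rpow_natCast, ← Real.rpow_mul hq.le, ← Real.rpow_add hq]
    norm_num
  have hs1 : 1 / 2 ≤ s := Real.le_sqrt_of_sq_le (by norm_num; linarith)
  have hs2 : s ≤ 3 / 2 := by
    rw [hs, Real.sqrt_le_left (by norm_num)]; linarith
  have ha1 : 2 / 3 ≤ a := by
    by_contra hcon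
    push Not at hcon
    nlinarith [mul_pos ha0 ha0]
  have hhC : (h : ℂ) ≠ 0 := by exact_mod_cast hh.ne'
  have np : ‖wrPlus V h E v v' x‖ = a * ‖v x * (h * d + Complex.I * s) - h * v' x‖ := by
    have : wrPlus V h E v v' x =
        (a * (v x * (h * d + Complex.I * s) - h * v' x)) * Complex.exp (θ * Complex.I) := by
      have e1 : (θ : ℂ) * Complex.I = Complex.I * wkbPhase V E x / h := by
        rw [hθ]; push_cast; ring
      rw [wrPlus, ep, wkbPlus, e1]
      simp only [Complex.ofReal_one, one_mul]
      rw [← hqd, ← ha]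
      field_simp
    rw [this, norm_mul, Complex.norm_exp_ofReal_mul_I, mul_one, norm_mul, Complex.norm_real,
      Real.norm_of_nonneg ha0.le]
  have nm : ‖wrMinus V h E v v' x‖ = a * ‖v x * (h * d - Complex.I * s) - h * v' x‖ := by
    have : wrMinus V h E v v' x =
        (a * (v x * (h * d - Complex.I * s) - h * v' x)) * Complex.exp ((-θ : ℝ) * Complex.I) := by
      have e1 : ((-θ : ℝ) : ℂ) * Complex.I = -Complex.I * wkbPhase V E x / h := by
        rw [hθ]; push_cast; ring
      rw [wrMinus, em, wkbMinus, e1]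
      simp only [Complex.ofReal_one, Complex.ofReal_neg, neg_mul, one_mul]
      field_simp
      ring
    rw [this, norm_mul, Complex.norm_exp_ofReal_mul_I, mul_one, norm_mul, Complex.norm_real,
      Real.norm_of_nonneg ha0.le]
  set A := v x * (h * d + Complex.I * s) - h * v' x with hA
  set B := v x * (h * d - Complex.I * s) - h * v' x with hB
  have hSe : S = a * (‖A‖ + ‖B‖) := by rw [hS, np, nm]; ring
  have hv1 : 2 * s * ‖v x‖ ≤ ‖A‖ + ‖B‖ := by
    have : A - B = ((2 * s : ℝ) : ℂ) * (Complex.I * v x) := by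
      rw [hA, hB]; push_cast; ring
    have h2 := norm_sub_le A B
    rw [this, norm_mul, norm_mul, Complex.norm_real, Complex.norm_I, one_mul,
      Real.norm_of_nonneg (by linarith)] at h2
    exact h2
  have hAB : ‖A‖ + ‖B‖ ≤ 3 / 2 * S := by
    rw [hSe]
    have : 0 ≤ ‖A‖ + ‖B‖ := by positivity
    nlinarith
  have hvS : ‖v x‖ ≤ 3 / 2 * S := by
    have := norm_nonneg (v x)
    nlinarith
  refine ⟨hvS, ?_⟩
  have hdM : |d| ≤ M := by
    rw [hd, abs_div, abs_of_pos (by linarith : 0 < 4 * q), div_le_iff₀ (by linarith)]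
    have := abs_nonneg (deriv V x)
    nlinarith
  have hM0 : 0 ≤ M := (abs_nonneg _).trans hdM
  have key : (h : ℂ) * v' x = ((h * d : ℝ) : ℂ) * v x - ((1 / 2 : ℝ) : ℂ) * (A + B) := by
    rw [hA, hB]; push_cast; ring
  rw [key]
  have h1 := norm_sub_le (((h * d : ℝ) : ℂ) * v x) (((1 / 2 : ℝ) : ℂ) * (A + B))
  have h2 := norm_add_le A B
  rw [norm_mul, norm_mul, Complex.norm_real, Complex.norm_real, Real.norm_eq_abs, abs_mul,
    abs_of_pos hh, Real.norm_of_nonneg (by norm_num : (0:ℝ) ≤ 1 / 2)] at h1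
  have h3 : h * |d| * ‖v x‖ ≤ M * (3 / 2 * S) := by
    have : h * |d| ≤ 1 * M := by gcongr
    calc _ ≤ 1 * M * (3 / 2 * S) := by gcongr
      _ = _ := by ring
  have hS0 : 0 ≤ S := by positivity
  have : 0 ≤ M * S := by positivity
  linarith

/-- For any solution `v` of `(P - E₀) v = 0` on `[3.5, R+1]`, its
semiclassical `H¹_h` norm on `(3.5, R̃)` is controlled by the Wronskians
`|W(v,v₊)(3.5)| + |W(v,v₋)(3.5)|`. -/
theorem h1_norm_controlled_by_wronskians
    (V : ℝ → ℝ)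
    (hV_smooth : ContDiff ℝ (⊤ : ℕ∞) V) (hV_comp : HasCompactSupport V)
    (hV_nonneg : ∀ x, 0 ≤ V x) (hV_even : ∀ x, V (-x) = V x)
    (hV_inner : ∀ x ∈ Set.Icc (-1 : ℝ) 1, V x = x ^ 2 + 1)
    (hV_slope : ∀ x ∈ Set.Icc (2 : ℝ) 3.5, V x = 4 - x)
    (hV_lt : ∀ x : ℝ, 3 < x → V x < 1)
    (hV_supp : tsupport V ⊆ Set.Icc (-5 : ℝ) 5)
    (R : ℝ) (hR : 5 < R) :
    ∃ C > (0 : ℝ), ∃ h₀ > (0 : ℝ), ∀ h : ℝ, 0 < h → h < h₀ →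
      ∀ E₀ : ℝ, |E₀ - (1 + h)| ≤ Real.exp (-1 / (10 * h)) →
      ∀ R' ∈ Set.Icc R (R + 1),
      ∀ v v' v'' : ℝ → ℂ,
        (∀ x ∈ Set.Icc (3.5 : ℝ) (R + 1), HasDerivAt v (v' x) x) →
        (∀ x ∈ Set.Icc (3.5 : ℝ) (R + 1), HasDerivAt v' (v'' x) x) →
        (∀ x ∈ Set.Icc (3.5 : ℝ) (R + 1),
          -(h : ℂ) ^ 2 * v'' x + ((V x - E₀ : ℝ) : ℂ) * v x = 0) →
        Real.sqrt ((∫ x in Set.Ioo (3.5 : ℝ) R', ‖v x‖ ^ 2)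
            + ∫ x in Set.Ioo (3.5 : ℝ) R', ‖(h : ℂ) * v' x‖ ^ 2)
          ≤ C * (‖wrPlus V h E₀ v v' 3.5‖ + ‖wrMinus V h E₀ v v' 3.5‖) := by
  obtain ⟨x₁, hx₁, hmax⟩ := (isCompact_Icc (a := (3.5:ℝ)) (b := R + 1)).exists_isMaxOn
    ⟨3.5, by constructor <;> linarith⟩ hV_smooth.continuous.continuousOn
  have hm1 : V x₁ < 1 := hV_lt _ (by have := hx₁.1; linarith)
  set m := V x₁ with hm
  have hm0 : 0 ≤ m := hV_nonneg _
  obtain ⟨M, hM⟩ := (isCompact_Icc (a := (3.5:ℝ)) (b := R + 1)).exists_bound_of_continuousOn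
    (hV_smooth.continuous_deriv (by simp)).continuousOn
  have hmem : (3.5 : ℝ) ∈ Icc (3.5:ℝ) (R + 1) := ⟨le_rfl, by linarith⟩
  have hM0 : 0 ≤ M := (norm_nonneg _).trans (hM _ hmem)
  set c := (1 - m) / 2 with hc
  have hc0 : 0 < c := by rw [hc]; linarith
  set D := Real.exp (M / c * (R + 1 - 3.5)) with hD
  have hD0 : 0 < D := Real.exp_pos _
  set L := R + 1 - 3.5 with hL
  have hL0 : 0 < L := by rw [hL]; linarith
  set C₁ := (1 + 2 * M) ^ 2 + 2 * (3 / 2) ^ 2 with hC₁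
  have hC₁0 : 0 < C₁ := by positivity
  set T := D * C₁ * (1 / c + 1) * L with hT
  have hT0 : 0 < T := by positivity
  refine ⟨Real.sqrt T, Real.sqrt_pos.2 hT0, c / 100, by positivity, ?_⟩
  intro h hh hh0 E hE R' hR' v v' v'' hv hv' heq
  have hexp : Real.exp (-1 / (10 * h)) ≤ 10 * h := by
    have h1 : 1 / (10 * h) ≤ Real.exp (1 / (10 * h)) := by
      have := Real.add_one_le_exp (1 / (10 * h)); linarith
    rw [neg_div, Real.exp_neg]
    calc _ ≤ (1 / (10 * h))⁻¹ := by gcongr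
      _ = _ := by simp
  have hE' := abs_le.1 (hE.trans hexp)
  have hc1 : c ≤ 1 / 2 := by rw [hc]; linarith
  have hq : ∀ x ∈ Icc (3.5:ℝ) (R + 1), c ≤ E - V x := by
    intro x hx
    have : V x ≤ m := hmax hx
    have : m = 1 - 2 * c := by rw [hc]; ring
    linarith [hE'.1]
  have hV35 : V 3.5 = 1 / 2 := by rw [hV_slope 3.5 (by constructor <;> norm_num)]; norm_num
  set S := ‖wrPlus V h E v v' 3.5‖ + ‖wrMinus V h E v v' 3.5‖ with hS
  have hS0 : 0 ≤ S := by positivity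
  obtain ⟨i1, i2⟩ := aux_init V hV_smooth h E 3.5 M v v' hh (by linarith) (hM _ hmem)
    (by rw [hV35]; linarith [hE'.1]) (by rw [hV35]; linarith [hE'.2])
  rw [← hS] at i1 i2
  have hF0 : ‖(h : ℂ) * v' 3.5‖ ^ 2 + (E - V 3.5) * ‖v 3.5‖ ^ 2 ≤ C₁ * S ^ 2 := by
    have h1 : ‖(h : ℂ) * v' 3.5‖ ^ 2 ≤ ((1 + 2 * M) * S) ^ 2 := by gcongr
    have h2 : (E - V 3.5) * ‖v 3.5‖ ^ 2 ≤ 2 * (3 / 2 * S) ^ 2 := by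
      gcongr
      rw [hV35]; linarith [hE'.2]
    calc _ ≤ _ := add_le_add h1 h2
      _ = _ := by rw [hC₁]; ring
  have hF : ∀ x ∈ Icc (3.5:ℝ) (R + 1),
      ‖(h : ℂ) * v' x‖ ^ 2 + (E - V x) * ‖v x‖ ^ 2 ≤ D * (C₁ * S ^ 2) := by
    intro x hx
    refine (aux_energy V hV_smooth h E 3.5 (R + 1) c M hc0 hM0 hq hM v v' v'' hv hv' heq x hx).trans ?_
    gcongr
  have hsub : ∀ x ∈ Ioo (3.5:ℝ) R', x ∈ Icc (3.5:ℝ) (R + 1) :=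
    fun x hx => ⟨hx.1.le, hx.2.le.trans hR'.2⟩
  have hvol : volume.real (Ioo (3.5:ℝ) R') ≤ L := by
    rw [Real.volume_real_Ioo_of_le (by linarith [hR'.1])]
    linarith [hR'.2]
  have I1 : ∫ x in Ioo (3.5 : ℝ) R', ‖v x‖ ^ 2 ≤ D * (C₁ * S ^ 2) / c * L := by
    have := norm_setIntegral_le_of_norm_le_const (μ := volume) (s := Ioo (3.5 : ℝ) R')
      (f := fun x => ‖v x‖ ^ 2) (C := D * (C₁ * S ^ 2) / c) (by simp) (by
        intro x hx
        rw [Real.norm_of_nonneg (by positivity), le_div_iff₀ hc0]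
        have h1 := hF x (hsub x hx)
        have h2 : c * ‖v x‖ ^ 2 ≤ (E - V x) * ‖v x‖ ^ 2 := by
          gcongr; exact hq x (hsub x hx)
        have := sq_nonneg ‖(h : ℂ) * v' x‖
        linarith)
    refine (le_abs_self _).trans (this.trans ?_)
    gcongr
  have I2 : ∫ x in Ioo (3.5 : ℝ) R', ‖(h : ℂ) * v' x‖ ^ 2 ≤ D * (C₁ * S ^ 2) * L := by
    have := norm_setIntegral_le_of_norm_le_const (μ := volume) (s := Ioo (3.5 : ℝ) R')
      (f := fun x => ‖(h : ℂ) * v' x‖ ^ 2) (C := D * (C₁ * S ^ 2)) (by simp) (by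
        intro x hx
        rw [Real.norm_of_nonneg (by positivity)]
        have h1 := hF x (hsub x hx)
        have h2 : 0 ≤ (E - V x) * ‖v x‖ ^ 2 := by
          have := hq x (hsub x hx)
          have : 0 ≤ E - V x := by linarith
          positivity
        linarith)
    refine (le_abs_self _).trans (this.trans ?_)
    gcongr
  calc _ ≤ Real.sqrt (T * S ^ 2) := by
        apply Real.sqrt_le_sqrt
        refine (add_le_add I1 I2).trans (le_of_eq ?_)
        rw [hT]; ring
    _ = Real.sqrt T * S := by rw [Real.sqrt_mul hT0.le, Real.sqrt_sq hS0]
end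
end
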